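/- arXiv:1711.02514 — 2 statements merged into one kernel-verified Lean document; each statement's English description precedes it below -/
import Mathlib

section
/- Let D₁₀ be the convex decagon in ℝ² with vertices (−3/5, −5/4), (3/5, −3/4), (7/5, −1/4), (8/5, 1/4), (7/5, 3/4), (3/5, 5/4), (−3/5, 3/4), (−7/5, 1/4), (−8/5, −1/4), (−7/5, −3/4). Then D₁₀ + ℤ² is a five-fold translative tiling of the plane, and no k-fold translative tiling of the plane by D₁₀ exists for any k ≤ 4; hence τ(D₁₀) = 5. -/
open Pointwise

/-- `K + X` is a `k`-fold translative tiling of the plane: the translate multiset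
`(x i)` is discrete, every point of the plane belongs to at least `k` of the translates
`K + x i`, and every point belongs to at most `k` of the translates `interior K + x i`
(multiplicity counted over the index set). -/
def IsKFoldTranslativeTiling {ι : Type} (K : Set (ℝ × ℝ)) (x : ι → ℝ × ℝ) (k : ℕ) : Prop :=
  (∀ R : ℝ, {i : ι | ‖x i‖ ≤ R}.Finite) ∧
  (∀ p : ℝ × ℝ, ∃ s : Finset ι, k ≤ s.card ∧ ∀ i ∈ s, p - x i ∈ K) ∧
  (∀ p : ℝ × ℝ, ∀ s : Finset ι, (∀ i ∈ s, p - x i ∈ interior K) → s.card ≤ k)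

/-- `P` is a (two-dimensional) convex polygon whose vertex set is the finite set `V`:
`P` is the convex hull of `V`, every element of `V` is an extreme point of `P`
(so `V` is exactly the vertex set), and `P` has nonempty interior. -/
def IsConvexPolygon (P : Set (ℝ × ℝ)) (V : Finset (ℝ × ℝ)) : Prop :=
  P = convexHull ℝ (V : Set (ℝ × ℝ)) ∧
  (∀ v ∈ V, v ∈ Set.extremePoints ℝ P) ∧
  (interior P).Nonempty

/-- `P` is symmetric about some point `c`. -/
def IsCentrallySymmetric (P : Set (ℝ × ℝ)) : Prop :=
  ∃ c : ℝ × ℝ, ∀ p ∈ P, 2 • c - p ∈ P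

/-- The segment `[a, b]` is an edge of the convex polygon `P` with vertex set `V`. -/
def IsEdge (P : Set (ℝ × ℝ)) (V : Finset (ℝ × ℝ)) (a b : ℝ × ℝ) : Prop :=
  a ∈ V ∧ b ∈ V ∧ a ≠ b ∧ segment ℝ a b ⊆ frontier P

/-- The decagon `D₁₀` with the ten listed vertices. -/
noncomputable def D₁₀ : Set (ℝ × ℝ) :=
  convexHull ℝ ({((-3 / 5 : ℝ), (-5 / 4 : ℝ)), (3 / 5, -3 / 4), (7 / 5, -1 / 4),
    (8 / 5, 1 / 4), (7 / 5, 3 / 4), (3 / 5, 5 / 4), (-3 / 5, 3 / 4), (-7 / 5, 1 / 4),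
    (-8 / 5, -1 / 4), (-7 / 5, -3 / 4)} : Set (ℝ × ℝ))

namespace Dec

def Per (g : ℤ × ℤ → ℤ) (v : ℤ × ℤ) : Prop := ∀ q, g (q + v) = g q

theorem Per.add {g v w} (h : Per g v) (h' : Per g w) : Per g (v + w) := by
  intro q; rw [← add_assoc, h', h]

theorem Per.neg {g v} (h : Per g v) : Per g (-v) := by
  intro q; have := h (q + -v); simpa using this.symm

theorem Per.zsmul {g v} (h : Per g v) (n : ℤ) : Per g (n • v) := by
  induction n using Int.induction_on with
  | zero => intro q; simp
  | succ n ih => rw [add_smul, one_smul]; exact ih.add h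
  | pred n ih => rw [sub_smul, one_smul, sub_eq_add_neg]; exact ih.add h.neg

def VV : Fin 5 → ℤ × ℤ := ![(3, -3), (7, -1), (8, 1), (7, 3), (3, 5)]

structure M (F : ℤ × ℤ → ℤ) : Prop where
  bdd : ∃ B : ℤ, ∀ q, |F q| ≤ B
  rel : ∀ i j q, F (q + VV i) + F (q - VV i) = F (q + VV j) + F (q - VV j)

def Dl (w : ℤ × ℤ) (F : ℤ × ℤ → ℤ) : ℤ × ℤ → ℤ := fun q => F (q + w) - F q

theorem M.dl {F} (h : M F) (w) : M (Dl w F) := by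
  constructor
  · obtain ⟨B, hB⟩ := h.bdd
    refine ⟨B + B, fun q => ?_⟩
    have h1 := abs_le.1 (hB q)
    have h2 := abs_le.1 (hB (q + w))
    rw [abs_le]; simp only [Dl]; constructor <;> linarith [h1.1, h1.2, h2.1, h2.2]
  · intro i j q
    have h1 := h.rel i j q
    have h2 := h.rel i j (q + w)
    simp only [Dl]
    rw [add_right_comm q (VV i) w, add_right_comm q (VV j) w, sub_add_eq_add_sub q (VV i) w,
      sub_add_eq_add_sub q (VV j) w]
    linarith

theorem dl_comm (a b F) : Dl a (Dl b F) = Dl b (Dl a F) := by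
  funext q; simp only [Dl, add_right_comm q a b]; ring

def Cl (w : ℤ × ℤ) (ps : List (ℤ × ℤ)) : Prop :=
  ∀ F, M F → (∀ v ∈ ps, Per (Dl w F) v) → ∀ q, Dl w F q = 0

theorem node (i j : Fin 5) {w ps} (hs : Cl w ((VV j + VV i) :: ps))
    (hd : Cl w ((VV j - VV i) :: ps)) : Cl w ps := by
  intro F hF hp
  have hdper : Per (Dl w F) (VV j - VV i) := by
    have := hs (Dl (VV j - VV i) F) (hF.dl _) ?_
    · intro q
      have h := this q
      rw [dl_comm] at h
      simp only [Dl] at h ⊢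
      linarith
    · intro v hv
      rw [dl_comm]
      rcases List.mem_cons.1 hv with rfl | hv
      · intro q
        have h := (hF.dl w).rel i j (q + VV j)
        simp only [Dl.eq_1 (VV j - VV i)]
        rw [show q + (VV j + VV i) + (VV j - VV i) = q + VV j + VV j by abel,
          show q + (VV j + VV i) = q + VV j + VV i by abel,
          show q + (VV j - VV i) = q + VV j - VV i by abel]
        rw [show q + VV j - VV j = q by abel] at h
        linarith
      · intro q
        have h := hp v hv
        simp only [Dl.eq_1 (VV j - VV i)]
        rw [add_right_comm, h, h]
  refine hd F hF ?_
  intro v hv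
  rcases List.mem_cons.1 hv with rfl | hv
  · exact hdper
  · exact hp v hv

theorem leaf {w ps} (h : ∀ g, (∀ v ∈ ps, Per g v) → Per g w) : Cl w ps := by
  intro F hF hp q
  have hw := h _ hp
  obtain ⟨B, hB⟩ := hF.bdd
  have key : ∀ n : ℕ, F (q + (n : ℤ) • w) = F q + n * Dl w F q := by
    intro n
    induction n with
    | zero => simp
    | succ n ih =>
      have h1 : Dl w F (q + (n : ℤ) • w) = Dl w F q := (hw.zsmul n) q
      rw [Dl] at h1
      have : q + ((n + 1 : ℕ) : ℤ) • w = q + (n : ℤ) • w + w := by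
        push_cast; rw [add_smul, one_smul, add_assoc]
      rw [this]
      push_cast
      linarith
  by_contra hne
  have h1 := hB (q + (((2 * B + 1).toNat : ℕ) : ℤ) • w)
  have h2 := hB q
  have hB0 : 0 ≤ B := (abs_nonneg _).trans h2
  rw [key] at h1
  have hn : (((2 * B + 1).toNat : ℕ) : ℤ) = 2 * B + 1 := Int.toNat_of_nonneg (by linarith)
  rw [hn] at h1
  rw [abs_le] at h1 h2
  rcases lt_or_gt_of_ne hne with h3 | h3 <;> nlinarith

theorem leaf1 {w a : ℤ × ℤ} {ps} (h : w = a) : Cl w (a :: ps) := by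
  refine leaf fun g hg => ?_
  rw [h]; exact hg a (by simp)

theorem leaf2 {w a b : ℤ × ℤ} {ps} (l m : ℤ) (h : w = l • a + m • b) :
    Cl w (a :: b :: ps) := by
  refine leaf fun g hg => ?_
  rw [h]
  exact ((hg a (by simp)).zsmul l).add ((hg b (by simp)).zsmul m)

theorem leaf3 {w a b c : ℤ × ℤ} {ps} (l m n : ℤ) (h : w = l • a + m • b + n • c) :
    Cl w (a :: b :: c :: ps) := by
  refine leaf fun g hg => ?_
  rw [h]
  exact (((hg a (by simp)).zsmul l).add ((hg b (by simp)).zsmul m)).add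
    ((hg c (by simp)).zsmul n)

theorem cl1 : Cl (10, 0) [] := by
  refine node 0 3 (leaf1 (by decide)) ?_
  refine node 1 4 ?_ ?_
  · exact node 0 2 (leaf3 2 (-2) 2 (by decide)) (leaf3 (-2) 2 0 (by decide))
  · exact node 1 2 (leaf3 (-2) (-5) 5 (by decide)) (leaf3 (-6) (-1) 3 (by decide))

theorem cl2 : Cl (0, 4) [] := by
  refine node 0 1 ?_ ?_
  · refine node 0 3 (leaf2 1 (-1) (by decide)) ?_
    exact node 2 4 (leaf3 (-4) 6 2 (by decide)) (leaf3 2 0 1 (by decide))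
  · refine node 2 3 ?_ ?_
    · exact node 1 2 (leaf3 (-1) 1 0 (by decide)) (leaf3 5 1 (-5) (by decide))
    · exact node 2 4 (leaf3 (-2) 2 6 (by decide)) (leaf3 1 (-1) 1 (by decide))

theorem M.per {F} (h : M F) (q) : F (q + (10, 0)) = F q ∧ F (q + (0, 4)) = F q := by
  have h1 := cl1 F h (by simp) q
  have h2 := cl2 F h (by simp) q
  simp only [Dl] at h1 h2
  constructor <;> linarith



/-- closed decagon by inequalities -/
def PC (q : ℝ × ℝ) : Prop :=
  (-12 ≤ 5 * q.1 - 12 * q.2 ∧ 5 * q.1 - 12 * q.2 ≤ 12) ∧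
  (-9 ≤ 5 * q.1 - 8 * q.2 ∧ 5 * q.1 - 8 * q.2 ≤ 9) ∧
  (-(15 / 2) ≤ 5 * q.1 - 2 * q.2 ∧ 5 * q.1 - 2 * q.2 ≤ 15 / 2) ∧
  (-(17 / 2) ≤ 5 * q.1 + 2 * q.2 ∧ 5 * q.1 + 2 * q.2 ≤ 17 / 2) ∧
  (-13 ≤ 5 * q.1 + 8 * q.2 ∧ 5 * q.1 + 8 * q.2 ≤ 13)

/-- open decagon by inequalities -/
def PO (q : ℝ × ℝ) : Prop :=
  (-12 < 5 * q.1 - 12 * q.2 ∧ 5 * q.1 - 12 * q.2 < 12) ∧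
  (-9 < 5 * q.1 - 8 * q.2 ∧ 5 * q.1 - 8 * q.2 < 9) ∧
  (-(15 / 2) < 5 * q.1 - 2 * q.2 ∧ 5 * q.1 - 2 * q.2 < 15 / 2) ∧
  (-(17 / 2) < 5 * q.1 + 2 * q.2 ∧ 5 * q.1 + 2 * q.2 < 17 / 2) ∧
  (-13 < 5 * q.1 + 8 * q.2 ∧ 5 * q.1 + 8 * q.2 < 13)

theorem trap {C : Set (ℝ × ℝ)} (hC : Convex ℝ C) {a0 b0 a1 b1 y0 y1 x y t : ℝ}
    (h1 : (a0, y0) ∈ C) (h2 : (b0, y0) ∈ C) (h3 : (a1, y1) ∈ C) (h4 : (b1, y1) ∈ C)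
    (ht0 : 0 ≤ t) (ht1 : t ≤ 1) (hy : y = (1 - t) * y0 + t * y1)
    (hl : (1 - t) * a0 + t * a1 ≤ x) (hr : x ≤ (1 - t) * b0 + t * b1) : (x, y) ∈ C := by
  have hL : ((1 - t) * a0 + t * a1, y) ∈ C := by
    have := hC h1 h3 (a := 1 - t) (b := t) (by linarith) ht0 (by ring)
    simpa [hy] using this
  have hR : ((1 - t) * b0 + t * b1, y) ∈ C := by
    have := hC h2 h4 (a := 1 - t) (b := t) (by linarith) ht0 (by ring)
    simpa [hy] using this
  set L := (1 - t) * a0 + t * a1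
  set R := (1 - t) * b0 + t * b1
  rcases eq_or_lt_of_le (hl.trans hr) with h | h
  · have : x = L := by linarith
    rw [this]; exact hL
  · have hp : 0 < R - L := by linarith
    have := hC hL hR (a := (R - x) / (R - L)) (b := (x - L) / (R - L))
      (div_nonneg (by linarith) hp.le) (div_nonneg (by linarith) hp.le)
      (by field_simp; ring)
    convert this using 1
    ext
    · simp; field_simp; ring
    · simp; field_simp; ring

theorem convex_PC : Convex ℝ {q : ℝ × ℝ | PC q} := by
  intro a ha b hb s t hs ht hst
  simp only [Set.mem_ofPred_eq, PC, Prod.fst_add, Prod.snd_add, Prod.smul_fst, Prod.smul_snd,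
    smul_eq_mul] at *
  obtain ⟨⟨a1, a2⟩, ⟨a3, a4⟩, ⟨a5, a6⟩, ⟨a7, a8⟩, ⟨a9, a10⟩⟩ := ha
  obtain ⟨⟨b1, b2⟩, ⟨b3, b4⟩, ⟨b5, b6⟩, ⟨b7, b8⟩, ⟨b9, b10⟩⟩ := hb
  obtain rfl : s = 1 - t := by linarith
  have key : ∀ {m X Y : ℝ}, m ≤ X → m ≤ Y → m ≤ (1 - t) * X + t * Y := by
    intro m X Y h1 h2; nlinarith
  have key' : ∀ {m X Y : ℝ}, X ≤ m → Y ≤ m → (1 - t) * X + t * Y ≤ m := by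
    intro m X Y h1 h2; nlinarith
  refine ⟨⟨?_, ?_⟩, ⟨?_, ?_⟩, ⟨?_, ?_⟩, ⟨?_, ?_⟩, ⟨?_, ?_⟩⟩
  · linarith [key a1 b1]
  · linarith [key' a2 b2]
  · linarith [key a3 b3]
  · linarith [key' a4 b4]
  · linarith [key a5 b5]
  · linarith [key' a6 b6]
  · linarith [key a7 b7]
  · linarith [key' a8 b8]
  · linarith [key a9 b9]
  · linarith [key' a10 b10]

set_option maxHeartbeats 2000000 in
theorem mem_D (q : ℝ × ℝ) : q ∈ D₁₀ ↔ PC q := by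
  constructor
  · intro h
    refine convexHull_min ?_ convex_PC h
    intro v hv
    simp only [Set.mem_insert_iff, Set.mem_singleton_iff] at hv
    rcases hv with rfl | rfl | rfl | rfl | rfl | rfl | rfl | rfl | rfl | rfl <;>
      norm_num [PC]
  · intro h
    have hc : Convex ℝ D₁₀ := convex_convexHull ℝ _
    have hv := subset_convexHull ℝ ({((-3 / 5 : ℝ), (-5 / 4 : ℝ)), (3 / 5, -3 / 4),
      (7 / 5, -1 / 4), (8 / 5, 1 / 4), (7 / 5, 3 / 4), (3 / 5, 5 / 4), (-3 / 5, 3 / 4),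
      (-7 / 5, 1 / 4), (-8 / 5, -1 / 4), (-7 / 5, -3 / 4)} : Set (ℝ × ℝ))
    change _ ⊆ D₁₀ at hv
    have v1 : ((-3 / 5 : ℝ), (-5 / 4 : ℝ)) ∈ D₁₀ := hv (by simp only [Set.mem_insert_iff, Set.mem_singleton_iff, true_or, or_true])
    have v2 : ((3 / 5 : ℝ), (-3 / 4 : ℝ)) ∈ D₁₀ := hv (by simp only [Set.mem_insert_iff, Set.mem_singleton_iff, true_or, or_true])
    have v3 : ((7 / 5 : ℝ), (-1 / 4 : ℝ)) ∈ D₁₀ := hv (by simp only [Set.mem_insert_iff, Set.mem_singleton_iff, true_or, or_true])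
    have v4 : ((8 / 5 : ℝ), (1 / 4 : ℝ)) ∈ D₁₀ := hv (by simp only [Set.mem_insert_iff, Set.mem_singleton_iff, true_or, or_true])
    have v5 : ((7 / 5 : ℝ), (3 / 4 : ℝ)) ∈ D₁₀ := hv (by simp only [Set.mem_insert_iff, Set.mem_singleton_iff, true_or, or_true])
    have v6 : ((3 / 5 : ℝ), (5 / 4 : ℝ)) ∈ D₁₀ := hv (by simp only [Set.mem_insert_iff, Set.mem_singleton_iff, true_or, or_true])
    have v7 : ((-3 / 5 : ℝ), (3 / 4 : ℝ)) ∈ D₁₀ := hv (by simp only [Set.mem_insert_iff, Set.mem_singleton_iff, true_or, or_true])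
    have v8 : ((-7 / 5 : ℝ), (1 / 4 : ℝ)) ∈ D₁₀ := hv (by simp only [Set.mem_insert_iff, Set.mem_singleton_iff, true_or, or_true])
    have v9 : ((-8 / 5 : ℝ), (-1 / 4 : ℝ)) ∈ D₁₀ := hv (by simp only [Set.mem_insert_iff, Set.mem_singleton_iff, true_or, or_true])
    have v10 : ((-7 / 5 : ℝ), (-3 / 4 : ℝ)) ∈ D₁₀ := hv (by simp only [Set.mem_insert_iff, Set.mem_singleton_iff, true_or, or_true])
    obtain ⟨x, y⟩ := q
    simp only [PC] at h
    obtain ⟨⟨_, _⟩, ⟨_, _⟩, ⟨_, _⟩, ⟨_, _⟩, ⟨_, _⟩⟩ := h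
    rcases le_total y (-3 / 4) with h1 | h1
    · exact trap hc (t := 2 * (y + 5 / 4)) v1 v1 v10 v2 (by linarith) (by linarith) (by ring)
        (by linarith) (by linarith)
    rcases le_total y (-1 / 4) with h2 | h2
    · exact trap hc (t := 2 * (y + 3 / 4)) v10 v2 v9 v3 (by linarith) (by linarith) (by ring)
        (by linarith) (by linarith)
    rcases le_total y (1 / 4) with h3 | h3
    · exact trap hc (t := 2 * (y + 1 / 4)) v9 v3 v8 v4 (by linarith) (by linarith) (by ring)
        (by linarith) (by linarith)
    rcases le_total y (3 / 4) with h4 | h4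
    · exact trap hc (t := 2 * (y - 1 / 4)) v8 v4 v7 v5 (by linarith) (by linarith) (by ring)
        (by linarith) (by linarith)
    · exact trap hc (t := 2 * (y - 3 / 4)) v7 v5 v6 v6 (by linarith) (by linarith) (by ring)
        (by linarith) (by linarith)

theorem mem_int (q : ℝ × ℝ) : q ∈ interior D₁₀ ↔ PO q := by
  constructor
  · intro h
    have hn : D₁₀ ∈ nhds q := mem_interior_iff_mem_nhds.1 h
    have key : ∀ u : ℝ × ℝ, ∃ ε : ℝ, 0 < ε ∧ PC (q + ε • u) := by
      intro u
      have hcont : Filter.Tendsto (fun ε : ℝ => q + ε • u) (nhds 0) (nhds q) := by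
        have : Continuous (fun ε : ℝ => q + ε • u) := by fun_prop
        simpa using this.tendsto 0
      have h1 : ∀ᶠ ε in nhdsWithin (0 : ℝ) (Set.Ioi 0), q + ε • u ∈ D₁₀ :=
        (hcont.mono_left nhdsWithin_le_nhds).eventually hn
      obtain ⟨ε, h2, h3⟩ := (h1.and self_mem_nhdsWithin).exists
      exact ⟨ε, h3, (mem_D _).1 h2⟩
    obtain ⟨a, ha, h1⟩ := key (1, 0)
    obtain ⟨b, hb, h2⟩ := key (-1, 0)
    simp only [PC, PO, Prod.fst_add, Prod.snd_add, Prod.smul_fst, Prod.smul_snd,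
        smul_eq_mul] at *
    refine ⟨⟨?_, ?_⟩, ⟨?_, ?_⟩, ⟨?_, ?_⟩, ⟨?_, ?_⟩, ⟨?_, ?_⟩⟩ <;> linarith
  · intro h
    have ho : IsOpen {q : ℝ × ℝ | PO q} := by
      simp only [PO, Set.ofPred_and]
      repeat' apply IsOpen.inter
      all_goals exact isOpen_lt (by fun_prop) (by fun_prop)
    refine interior_maximal (s := D₁₀) (t := {q : ℝ × ℝ | PO q}) ?_ ho h
    intro p hp
    rw [mem_D]
    simp only [PC, PO, Set.mem_ofPred_eq] at *
    refine ⟨⟨?_, ?_⟩, ⟨?_, ?_⟩, ⟨?_, ?_⟩, ⟨?_, ?_⟩, ⟨?_, ?_⟩⟩ <;> linarith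

def hc (t c z : ℝ) : Prop := (0 < t → -c ≤ z ∧ z < c) ∧ (t < 0 → -c < z ∧ z ≤ c)

/-- half-open decagon in direction `u` -/
def H (u q : ℝ × ℝ) : Prop :=
  hc (5 * u.1 - 12 * u.2) 12 (5 * q.1 - 12 * q.2) ∧
  hc (5 * u.1 - 8 * u.2) 9 (5 * q.1 - 8 * q.2) ∧
  hc (5 * u.1 - 2 * u.2) (15 / 2) (5 * q.1 - 2 * q.2) ∧
  hc (5 * u.1 + 2 * u.2) (17 / 2) (5 * q.1 + 2 * q.2) ∧
  hc (5 * u.1 + 8 * u.2) 13 (5 * q.1 + 8 * q.2)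

def Gen (u : ℝ × ℝ) : Prop :=
  5 * u.1 - 12 * u.2 ≠ 0 ∧ 5 * u.1 - 8 * u.2 ≠ 0 ∧ 5 * u.1 - 2 * u.2 ≠ 0 ∧
  5 * u.1 + 2 * u.2 ≠ 0 ∧ 5 * u.1 + 8 * u.2 ≠ 0

theorem H_one (q : ℝ × ℝ) : H (1, 0) q ↔
  (-12 ≤ 5 * q.1 - 12 * q.2 ∧ 5 * q.1 - 12 * q.2 < 12) ∧
  (-9 ≤ 5 * q.1 - 8 * q.2 ∧ 5 * q.1 - 8 * q.2 < 9) ∧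
  (-(15 / 2) ≤ 5 * q.1 - 2 * q.2 ∧ 5 * q.1 - 2 * q.2 < 15 / 2) ∧
  (-(17 / 2) ≤ 5 * q.1 + 2 * q.2 ∧ 5 * q.1 + 2 * q.2 < 17 / 2) ∧
  (-13 ≤ 5 * q.1 + 8 * q.2 ∧ 5 * q.1 + 8 * q.2 < 13) := by
  norm_num [H, hc]

theorem slice {x' y : ℝ} (h : H (1, 0) (x', y)) : -(5 / 4) < y ∧ y < 5 / 4 := by
  rw [H_one] at h
  constructor <;> linarith

theorem slice1 {x' y : ℝ} (h1 : -(5 / 4) ≤ y) (h2 : y ≤ -(3 / 4)) :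
    H (1, 0) (x', y) ↔ -(13 / 5) - 8 / 5 * y ≤ x' ∧ x' < 12 / 5 + 12 / 5 * y := by
  rw [H_one]
  constructor
  · intro h; constructor <;> linarith
  · rintro ⟨h, h'⟩
    refine ⟨⟨?_, ?_⟩, ⟨?_, ?_⟩, ⟨?_, ?_⟩, ⟨?_, ?_⟩, ⟨?_, ?_⟩⟩ <;> simp only <;> linarith

theorem slice2 {x' y : ℝ} (h1 : -(3 / 4) ≤ y) (h2 : y ≤ -(1 / 4)) :
    H (1, 0) (x', y) ↔ -(17 / 10) - 2 / 5 * y ≤ x' ∧ x' < 9 / 5 + 8 / 5 * y := by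
  rw [H_one]
  constructor
  · intro h; constructor <;> linarith
  · rintro ⟨h, h'⟩
    refine ⟨⟨?_, ?_⟩, ⟨?_, ?_⟩, ⟨?_, ?_⟩, ⟨?_, ?_⟩, ⟨?_, ?_⟩⟩ <;> simp only <;> linarith

theorem slice3 {x' y : ℝ} (h1 : -(1 / 4) ≤ y) (h2 : y ≤ 1 / 4) :
    H (1, 0) (x', y) ↔ -(3 / 2) + 2 / 5 * y ≤ x' ∧ x' < 3 / 2 + 2 / 5 * y := by
  rw [H_one]
  constructor
  · intro h; constructor <;> linarith
  · rintro ⟨h, h'⟩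
    refine ⟨⟨?_, ?_⟩, ⟨?_, ?_⟩, ⟨?_, ?_⟩, ⟨?_, ?_⟩, ⟨?_, ?_⟩⟩ <;> simp only <;> linarith

theorem slice4 {x' y : ℝ} (h1 : 1 / 4 ≤ y) (h2 : y ≤ 3 / 4) :
    H (1, 0) (x', y) ↔ -(9 / 5) + 8 / 5 * y ≤ x' ∧ x' < 17 / 10 - 2 / 5 * y := by
  rw [H_one]
  constructor
  · intro h; constructor <;> linarith
  · rintro ⟨h, h'⟩
    refine ⟨⟨?_, ?_⟩, ⟨?_, ?_⟩, ⟨?_, ?_⟩, ⟨?_, ?_⟩, ⟨?_, ?_⟩⟩ <;> simp only <;> linarith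

theorem slice5 {x' y : ℝ} (h1 : 3 / 4 ≤ y) (h2 : y ≤ 5 / 4) :
    H (1, 0) (x', y) ↔ -(12 / 5) + 12 / 5 * y ≤ x' ∧ x' < 13 / 5 - 8 / 5 * y := by
  rw [H_one]
  constructor
  · intro h; constructor <;> linarith
  · rintro ⟨h, h'⟩
    refine ⟨⟨?_, ?_⟩, ⟨?_, ?_⟩, ⟨?_, ?_⟩, ⟨?_, ?_⟩, ⟨?_, ?_⟩⟩ <;> simp only <;> linarith

theorem mem_row (x L R : ℝ) (m : ℤ) :
    m ∈ Finset.Ioc ⌊x - R⌋ ⌊x - L⌋ ↔ L ≤ x - m ∧ x - m < R := by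
  rw [Finset.mem_Ioc, Int.floor_lt, Int.le_floor]
  constructor
  · rintro ⟨h1, h2⟩; constructor <;> linarith
  · rintro ⟨h1, h2⟩; constructor <;> linarith

theorem count5 (p : ℝ × ℝ) : ∃ s : Finset (ℤ × ℤ), s.card = 5 ∧
    ∀ z : ℤ × ℤ, z ∈ s ↔ H (1, 0) (p - ((z.1 : ℝ), (z.2 : ℝ))) := by
  obtain ⟨x, y⟩ := p
  obtain ⟨n0, hn0⟩ : ∃ n : ℤ, n = ⌊y + 5 / 4⌋ := ⟨_, rfl⟩
  have hf1 := Int.floor_le (y + 5 / 4)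
  have hf2 := Int.lt_floor_add_one (y + 5 / 4)
  rw [← hn0] at hf1 hf2
  obtain ⟨Y, hY⟩ : ∃ Y : ℝ, Y = y - n0 := ⟨_, rfl⟩
  have hY1 : -(5 / 4) ≤ Y := by linarith
  have hY2 : Y < -(1 / 4) := by linarith
  have rows : ∀ m n : ℤ, H (1, 0) (x - m, y - n) → n = n0 ∨ n = n0 - 1 ∨ n = n0 - 2 := by
    intro m n h
    have := slice h
    have h1 : (n : ℝ) < n0 + 1 := by linarith
    have h2 : (n0 : ℝ) - 3 < n := by linarith
    have h3 : n < n0 + 1 := by exact_mod_cast h1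
    have h4 : n0 - 3 < n := by exact_mod_cast h2
    omega
  have e0 : y - ((n0 : ℤ) : ℝ) = Y := by rw [hY]
  have e1 : y - ((n0 - 1 : ℤ) : ℝ) = Y + 1 := by rw [hY]; push_cast; ring
  have e2 : y - ((n0 - 2 : ℤ) : ℝ) = Y + 2 := by rw [hY]; push_cast; ring
  rcases le_total Y (-(3 / 4)) with hc | hc
  · refine ⟨Finset.Ioc ⌊x - (12 / 5 + 12 / 5 * Y)⌋ ⌊x - (-(13 / 5) - 8 / 5 * Y)⌋ ×ˢ {n0} ∪
      (Finset.Ioc ⌊x - (3 / 2 + 2 / 5 * (Y + 1))⌋ ⌊x - (-(3 / 2) + 2 / 5 * (Y + 1))⌋ ×ˢ {n0 - 1} ∪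
       Finset.Ioc ⌊x - (13 / 5 - 8 / 5 * (Y + 2))⌋ ⌊x - (-(12 / 5) + 12 / 5 * (Y + 2))⌋
        ×ˢ {n0 - 2}), ?_, ?_⟩
    · rw [Finset.card_union_of_disjoint, Finset.card_union_of_disjoint]
      · simp only [Finset.card_product, Finset.card_singleton, mul_one, Int.card_Ioc]
        have a1 : ⌊x - (-(12 / 5) + 12 / 5 * (Y + 2))⌋ = ⌊x - (12 / 5 + 12 / 5 * Y)⌋ := by
          congr 1; ring
        have a2 : ⌊x - (-(13 / 5) - 8 / 5 * Y)⌋ = ⌊x - (13 / 5 - 8 / 5 * (Y + 2))⌋ + 2 := by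
          rw [← Int.floor_add_ofNat]; congr 1; ring
        have a3 : ⌊x - (-(3 / 2) + 2 / 5 * (Y + 1))⌋ = ⌊x - (3 / 2 + 2 / 5 * (Y + 1))⌋ + 3 := by
          rw [← Int.floor_add_ofNat]; congr 1; ring
        have b1 : ⌊x - (12 / 5 + 12 / 5 * Y)⌋ ≤ ⌊x - (-(13 / 5) - 8 / 5 * Y)⌋ :=
          Int.floor_le_floor (by linarith)
        have b2 : ⌊x - (13 / 5 - 8 / 5 * (Y + 2))⌋ ≤ ⌊x - (12 / 5 + 12 / 5 * Y)⌋ :=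
          Int.floor_le_floor (by linarith)
        rw [a1, a3]
        omega
      · rw [Finset.disjoint_left]
        rintro ⟨a, b⟩ h1 h2
        simp only [Finset.mem_product, Finset.mem_singleton] at h1 h2
        omega
      · rw [Finset.disjoint_left]
        rintro ⟨a, b⟩ h1 h2
        simp only [Finset.mem_union, Finset.mem_product, Finset.mem_singleton] at h1 h2
        omega
    · rintro ⟨m, n⟩
      simp only [Finset.mem_union, Finset.mem_product, Finset.mem_singleton, mem_row,
        Prod.mk_sub_mk]
      constructor
      · rintro (⟨h, rfl⟩ | ⟨h, rfl⟩ | ⟨h, rfl⟩)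
        · rw [e0, slice1 hY1 hc]; exact h
        · rw [e1, slice3 (by linarith) (by linarith)]; exact h
        · rw [e2, slice5 (by linarith) (by linarith)]; exact h
      · intro h
        rcases rows m n h with rfl | rfl | rfl
        · rw [e0, slice1 hY1 hc] at h; exact Or.inl ⟨h, rfl⟩
        · rw [e1, slice3 (by linarith) (by linarith)] at h; exact Or.inr (Or.inl ⟨h, rfl⟩)
        · rw [e2, slice5 (by linarith) (by linarith)] at h; exact Or.inr (Or.inr ⟨h, rfl⟩)
  · refine ⟨Finset.Ioc ⌊x - (9 / 5 + 8 / 5 * Y)⌋ ⌊x - (-(17 / 10) - 2 / 5 * Y)⌋ ×ˢ {n0} ∪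
      Finset.Ioc ⌊x - (17 / 10 - 2 / 5 * (Y + 1))⌋ ⌊x - (-(9 / 5) + 8 / 5 * (Y + 1))⌋ ×ˢ {n0 - 1},
      ?_, ?_⟩
    · rw [Finset.card_union_of_disjoint]
      · simp only [Finset.card_product, Finset.card_singleton, mul_one, Int.card_Ioc]
        have a1 : ⌊x - (-(9 / 5) + 8 / 5 * (Y + 1))⌋ = ⌊x - (9 / 5 + 8 / 5 * Y)⌋ + 2 := by
          rw [← Int.floor_add_ofNat]; congr 1; ring
        have a2 : ⌊x - (-(17 / 10) - 2 / 5 * Y)⌋ = ⌊x - (17 / 10 - 2 / 5 * (Y + 1))⌋ + 3 := by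
          rw [← Int.floor_add_ofNat]; congr 1; ring
        have b1 : ⌊x - (9 / 5 + 8 / 5 * Y)⌋ ≤ ⌊x - (-(17 / 10) - 2 / 5 * Y)⌋ :=
          Int.floor_le_floor (by linarith)
        have b2 : ⌊x - (17 / 10 - 2 / 5 * (Y + 1))⌋ ≤ ⌊x - (-(9 / 5) + 8 / 5 * (Y + 1))⌋ :=
          Int.floor_le_floor (by linarith)
        omega
      · rw [Finset.disjoint_left]
        rintro ⟨a, b⟩ h1 h2
        simp only [Finset.mem_product, Finset.mem_singleton] at h1 h2
        omega
    · rintro ⟨m, n⟩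
      simp only [Finset.mem_union, Finset.mem_product, Finset.mem_singleton, mem_row,
        Prod.mk_sub_mk]
      constructor
      · rintro (⟨h, rfl⟩ | ⟨h, rfl⟩)
        · rw [e0, slice2 hc hY2.le]; exact h
        · rw [e1, slice4 (by linarith) (by linarith)]; exact h
      · intro h
        rcases rows m n h with rfl | rfl | rfl
        · rw [e0, slice2 hc hY2.le] at h; exact Or.inl ⟨h, rfl⟩
        · rw [e1, slice4 (by linarith) (by linarith)] at h; exact Or.inr ⟨h, rfl⟩
        · exfalso
          rw [e2] at h
          have := (slice h).2
          linarith

theorem PC_of_H_one {q} (h : H (1, 0) q) : PC q := by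
  rw [H_one] at h
  simp only [PC]
  refine ⟨⟨?_, ?_⟩, ⟨?_, ?_⟩, ⟨?_, ?_⟩, ⟨?_, ?_⟩, ⟨?_, ?_⟩⟩ <;> linarith

theorem H_one_of_PO {q} (h : PO q) : H (1, 0) q := by
  rw [H_one]
  simp only [PO] at h
  refine ⟨⟨?_, ?_⟩, ⟨?_, ?_⟩, ⟨?_, ?_⟩, ⟨?_, ?_⟩, ⟨?_, ?_⟩⟩ <;> linarith

theorem part1 :
    IsKFoldTranslativeTiling D₁₀ (fun z : ℤ × ℤ => (((z.1 : ℝ), (z.2 : ℝ)) : ℝ × ℝ)) 5 := by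
  refine ⟨fun R => ?_, fun p => ?_, fun p s hs => ?_⟩
  · refine Set.Finite.subset ((Set.finite_Icc (-⌈R⌉) ⌈R⌉).prod (Set.finite_Icc (-⌈R⌉) ⌈R⌉)) ?_
    rintro ⟨a, b⟩ h
    simp only [Set.mem_ofPred_eq, Prod.norm_def, sup_le_iff, Real.norm_eq_abs, abs_le] at h
    obtain ⟨⟨h1, h2⟩, h3, h4⟩ := h
    have hR := Int.le_ceil R
    simp only [Set.mem_prod, Set.mem_Icc]
    refine ⟨⟨?_, ?_⟩, ?_, ?_⟩
    · have : (-(⌈R⌉ : ℝ)) ≤ a := by linarith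
      exact_mod_cast this
    · have : (a : ℝ) ≤ ⌈R⌉ := by linarith
      exact_mod_cast this
    · have : (-(⌈R⌉ : ℝ)) ≤ b := by linarith
      exact_mod_cast this
    · have : (b : ℝ) ≤ ⌈R⌉ := by linarith
      exact_mod_cast this
  · obtain ⟨s, h1, h2⟩ := count5 p
    exact ⟨s, h1.ge, fun i hi => (mem_D _).2 (PC_of_H_one ((h2 i).1 hi))⟩
  · obtain ⟨t, h1, h2⟩ := count5 p
    rw [← h1]
    exact Finset.card_le_card fun i hi => (h2 i).2 (H_one_of_PO ((mem_int _).1 (hs i hi)))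

theorem ev_lt (t : ℝ) {a b : ℝ} (h : a < b) :
    ∀ᶠ ε in nhdsWithin (0 : ℝ) (Set.Ioi 0), a + ε * t < b := by
  have hcont : Filter.Tendsto (fun ε : ℝ => a + ε * t) (nhds 0) (nhds a) := by
    have : Continuous (fun ε : ℝ => a + ε * t) := by fun_prop
    simpa using this.tendsto 0
  exact (hcont.mono_left nhdsWithin_le_nhds).eventually (gt_mem_nhds h)

theorem ev_gt (t : ℝ) {a b : ℝ} (h : b < a) :
    ∀ᶠ ε in nhdsWithin (0 : ℝ) (Set.Ioi 0), b < a + ε * t := by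
  have hcont : Filter.Tendsto (fun ε : ℝ => a + ε * t) (nhds 0) (nhds a) := by
    have : Continuous (fun ε : ℝ => a + ε * t) := by fun_prop
    simpa using this.tendsto 0
  exact (hcont.mono_left nhdsWithin_le_nhds).eventually (lt_mem_nhds h)

theorem ev_hc {t c z : ℝ} (ht : t ≠ 0) :
    ∀ᶠ ε in nhdsWithin (0 : ℝ) (Set.Ioi 0),
      (hc t c z → -c < z + ε * t ∧ z + ε * t < c) ∧
      (-c ≤ z + ε * t ∧ z + ε * t ≤ c → hc t c z) := by
  have e1 : ∀ᶠ ε in nhdsWithin (0 : ℝ) (Set.Ioi 0), (z < c → z + ε * t < c) := by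
    by_cases h : z < c
    · filter_upwards [ev_lt t h] with ε he _ using he
    · exact Filter.Eventually.of_forall fun _ h' => absurd h' h
  have e2 : ∀ᶠ ε in nhdsWithin (0 : ℝ) (Set.Ioi 0), (z < -c → z + ε * t < -c) := by
    by_cases h : z < -c
    · filter_upwards [ev_lt t h] with ε he _ using he
    · exact Filter.Eventually.of_forall fun _ h' => absurd h' h
  have e3 : ∀ᶠ ε in nhdsWithin (0 : ℝ) (Set.Ioi 0), (c < z → c < z + ε * t) := by
    by_cases h : c < z
    · filter_upwards [ev_gt t h] with ε he _ using he
    · exact Filter.Eventually.of_forall fun _ h' => absurd h' h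
  have e4 : ∀ᶠ ε in nhdsWithin (0 : ℝ) (Set.Ioi 0), (-c < z → -c < z + ε * t) := by
    by_cases h : -c < z
    · filter_upwards [ev_gt t h] with ε he _ using he
    · exact Filter.Eventually.of_forall fun _ h' => absurd h' h
  have e5 : ∀ᶠ ε in nhdsWithin (0 : ℝ) (Set.Ioi 0), (0 : ℝ) < ε := self_mem_nhdsWithin
  filter_upwards [e1, e2, e3, e4, e5] with ε h1 h2 h3 h4 h5
  rcases lt_or_gt_of_ne ht with h | h
  · have hp : ε * t < 0 := mul_neg_of_pos_of_neg h5 h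
    constructor
    · intro hh
      have := hh.2 h
      exact ⟨h4 this.1, by linarith⟩
    · rintro ⟨ha, hb⟩
      refine ⟨fun h' => by linarith, fun _ => ⟨by linarith, ?_⟩⟩
      by_contra hcon
      linarith [h3 (by linarith)]
  · have hp : 0 < ε * t := mul_pos h5 h
    constructor
    · intro hh
      have := hh.1 h
      exact ⟨by linarith, h1 this.2⟩
    · rintro ⟨ha, hb⟩
      refine ⟨fun _ => ⟨?_, by linarith⟩, fun h' => by linarith⟩
      by_contra hcon
      linarith [h2 (by linarith)]

theorem ev_H {u : ℝ × ℝ} (hu : Gen u) (q : ℝ × ℝ) :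
    ∀ᶠ ε in nhdsWithin (0 : ℝ) (Set.Ioi 0),
      (H u q → PO (q + ε • u)) ∧ (PC (q + ε • u) → H u q) := by
  obtain ⟨h1, h2, h3, h4, h5⟩ := hu
  filter_upwards [ev_hc (c := 12) (z := 5 * q.1 - 12 * q.2) h1,
    ev_hc (c := 9) (z := 5 * q.1 - 8 * q.2) h2,
    ev_hc (c := 15 / 2) (z := 5 * q.1 - 2 * q.2) h3,
    ev_hc (c := 17 / 2) (z := 5 * q.1 + 2 * q.2) h4,
    ev_hc (c := 13) (z := 5 * q.1 + 8 * q.2) h5] with ε a1 a2 a3 a4 a5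
  have r1 : 5 * (q + ε • u).1 - 12 * (q + ε • u).2 =
    5 * q.1 - 12 * q.2 + ε * (5 * u.1 - 12 * u.2) := by simp; ring
  have r2 : 5 * (q + ε • u).1 - 8 * (q + ε • u).2 =
    5 * q.1 - 8 * q.2 + ε * (5 * u.1 - 8 * u.2) := by simp; ring
  have r3 : 5 * (q + ε • u).1 - 2 * (q + ε • u).2 =
    5 * q.1 - 2 * q.2 + ε * (5 * u.1 - 2 * u.2) := by simp; ring
  have r4 : 5 * (q + ε • u).1 + 2 * (q + ε • u).2 =
    5 * q.1 + 2 * q.2 + ε * (5 * u.1 + 2 * u.2) := by simp; ring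
  have r5 : 5 * (q + ε • u).1 + 8 * (q + ε • u).2 =
    5 * q.1 + 8 * q.2 + ε * (5 * u.1 + 8 * u.2) := by simp; ring
  simp only [PO, PC, H, r1, r2, r3, r4, r5]
  exact ⟨fun ⟨b1, b2, b3, b4, b5⟩ => ⟨a1.1 b1, a2.1 b2, a3.1 b3, a4.1 b4, a5.1 b5⟩,
    fun ⟨b1, b2, b3, b4, b5⟩ => ⟨a1.2 b1, a2.2 b2, a3.2 b3, a4.2 b4, a5.2 b5⟩⟩

theorem PC.norm {q : ℝ × ℝ} (h : PC q) : ‖q‖ ≤ 2 := by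
  simp only [PC] at h
  simp only [Prod.norm_def, sup_le_iff, Real.norm_eq_abs, abs_le]
  refine ⟨⟨?_, ?_⟩, ?_, ?_⟩ <;> linarith

theorem hc.closed {t c z : ℝ} (ht : t ≠ 0) (h : hc t c z) : -c ≤ z ∧ z ≤ c := by
  rcases lt_or_gt_of_ne ht with h' | h'
  · exact ⟨(h.2 h').1.le, (h.2 h').2⟩
  · exact ⟨(h.1 h').1, (h.1 h').2.le⟩

theorem H.PC {u q : ℝ × ℝ} (hu : Gen u) (h : H u q) : PC q :=
  ⟨h.1.closed hu.1, h.2.1.closed hu.2.1, h.2.2.1.closed hu.2.2.1,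
    h.2.2.2.1.closed hu.2.2.2.1, h.2.2.2.2.closed hu.2.2.2.2⟩

theorem PO.H {q : ℝ × ℝ} (u : ℝ × ℝ) (h : PO q) : H u q := by
  have key : ∀ {t c z : ℝ}, -c < z ∧ z < c → hc t c z := by
    intro t c z h
    exact ⟨fun _ => ⟨h.1.le, h.2⟩, fun _ => ⟨h.1, h.2.le⟩⟩
  exact ⟨key h.1, key h.2.1, key h.2.2.1, key h.2.2.2.1, key h.2.2.2.2⟩

theorem PO.PC {q : ℝ × ℝ} (h : PO q) : PC q := PC_of_H_one (h.H _)

theorem Gen.neg {u : ℝ × ℝ} (h : Gen u) : Gen (-u) := by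
  obtain ⟨h1, h2, h3, h4, h5⟩ := h
  simp only [Gen, Prod.fst_neg, Prod.snd_neg]
  refine ⟨fun h => h1 ?_, fun h => h2 ?_, fun h => h3 ?_, fun h => h4 ?_, fun h => h5 ?_⟩ <;>
    linarith

theorem H.both {u q : ℝ × ℝ} (hu : Gen u) (h : H u q) (h' : H (-u) q) : PO q := by
  have key : ∀ {t t' c z : ℝ}, t ≠ 0 → t' = -t → hc t c z → hc t' c z → -c < z ∧ z < c := by
    rintro t t' c z ht rfl h h'
    rcases lt_or_gt_of_ne ht with h0 | h0
    · exact ⟨(h.2 h0).1, (h'.1 (by linarith)).2⟩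
    · exact ⟨(h'.2 (by linarith)).1, (h.1 h0).2⟩
  obtain ⟨h1, h2, h3, h4, h5⟩ := hu
  obtain ⟨a1, a2, a3, a4, a5⟩ := h
  obtain ⟨b1, b2, b3, b4, b5⟩ := h'
  refine ⟨key h1 ?_ a1 b1, key h2 ?_ a2 b2, key h3 ?_ a3 b3, key h4 ?_ a4 b4, key h5 ?_ a5 b5⟩ <;>
    (simp; ring)

def viol (t c z : ℝ) : Prop := (0 < t ∧ z = c) ∨ (t < 0 ∧ z = -c)

theorem not_H {u q : ℝ × ℝ} (h : PC q) (h' : ¬ H u q) :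
    viol (5 * u.1 - 12 * u.2) 12 (5 * q.1 - 12 * q.2) ∨
    viol (5 * u.1 - 8 * u.2) 9 (5 * q.1 - 8 * q.2) ∨
    viol (5 * u.1 - 2 * u.2) (15 / 2) (5 * q.1 - 2 * q.2) ∨
    viol (5 * u.1 + 2 * u.2) (17 / 2) (5 * q.1 + 2 * q.2) ∨
    viol (5 * u.1 + 8 * u.2) 13 (5 * q.1 + 8 * q.2) := by
  have key : ∀ {t c z : ℝ}, -c ≤ z ∧ z ≤ c → ¬ viol t c z → hc t c z := by
    intro t c z h hv
    simp only [viol, not_or, not_and] at hv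
    exact ⟨fun h0 => ⟨h.1, lt_of_le_of_ne h.2 (hv.1 h0)⟩,
      fun h0 => ⟨lt_of_le_of_ne h.1 (Ne.symm (hv.2 h0)), h.2⟩⟩
  by_contra hcon
  simp only [not_or] at hcon
  obtain ⟨c1, c2, c3, c4, c5⟩ := hcon
  obtain ⟨a1, a2, a3, a4, a5⟩ := h
  exact h' ⟨key a1 c1, key a2 c2, key a3 c3, key a4 c4, key a5 c5⟩

/-- direction `u` corresponds to vertex `V` -/
structure Dir (u V : ℝ × ℝ) : Prop where
  gen : Gen u
  pc : PC V
  pc' : PC (-V)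
  n1 : ¬ H u V
  n2 : ¬ H (-u) V
  n3 : ¬ H u (-V)
  n4 : ¬ H (-u) (-V)
  ne : V ≠ -V
  only : ∀ q, PC q → ¬ H u q → ¬ H (-u) q → q = V ∨ q = -V

open Classical in
theorem Dir.ident {u V : ℝ × ℝ} (h : Dir u V) (q : ℝ × ℝ) :
    (if H u q then 1 else 0) + (if H (-u) q then 1 else 0) + (if q = V then 1 else 0)
      + (if q = -V then 1 else 0) = (if PC q then 1 else 0) + (if PO q then (1 : ℤ) else 0) := by
  by_cases hV : q = V
  · subst hV
    have : ¬ PO q := fun h' => h.n1 (h'.H u)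
    simp [h.n1, h.n2, h.ne, h.pc, this]
  by_cases hV' : q = -V
  · subst hV'
    have : ¬ PO (-V) := fun h' => h.n3 (h'.H u)
    simp [h.n3, h.n4, h.pc', this, hV]
  by_cases h1 : H u q <;> by_cases h2 : H (-u) q
  · have := H.both h.gen h1 h2
    simp [h1, h2, hV, hV', this, this.PC]
  · have : ¬ PO q := fun h' => h2 (h'.H _)
    simp [h1, h2, hV, hV', this, h1.PC h.gen]
  · have : ¬ PO q := fun h' => h1 (h'.H _)
    simp [h1, h2, hV, hV', this, h2.PC h.gen.neg]
  · have : ¬ PO q := fun h' => h1 (h'.H _)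
    have h3 : ¬ PC q := fun h' => by
      rcases h.only q h' h1 h2 with h | h
      · exact hV h
      · exact hV' h
    simp [h1, h2, hV, hV', this, h3]

theorem dir1 : Dir (2, 1) (3 / 5, -(3 / 4)) := by
  constructor
  · norm_num [Gen]
  · norm_num [PC]
  · norm_num [PC]
  · norm_num [H, hc]
  · norm_num [H, hc]
  · norm_num [H, hc]
  · norm_num [H, hc]
  · norm_num [Prod.ext_iff]
  · rintro ⟨x, y⟩ h0 h1 h2
    have h1 := not_H h0 h1
    have h2 := not_H h0 h2
    norm_num [viol] at h1 h2
    simp only [PC] at h0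
    obtain ⟨⟨_, _⟩, ⟨_, _⟩, ⟨_, _⟩, ⟨_, _⟩, ⟨_, _⟩⟩ := h0
    rcases h1 with h1 | h1 | h1 | h1 | h1 <;> rcases h2 with h2 | h2 | h2 | h2 | h2 <;>
    first
    | (exfalso; linarith)
    | (left; ext <;> simp only <;> linarith)
    | (right; ext <;> simp only [Prod.fst_neg, Prod.snd_neg] <;> linarith)

theorem dir2 : Dir (1, 1) (7 / 5, -(1 / 4)) := by
  constructor
  · norm_num [Gen]
  · norm_num [PC]
  · norm_num [PC]
  · norm_num [H, hc]
  · norm_num [H, hc]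
  · norm_num [H, hc]
  · norm_num [H, hc]
  · norm_num [Prod.ext_iff]
  · rintro ⟨x, y⟩ h0 h1 h2
    have h1 := not_H h0 h1
    have h2 := not_H h0 h2
    norm_num [viol] at h1 h2
    simp only [PC] at h0
    obtain ⟨⟨_, _⟩, ⟨_, _⟩, ⟨_, _⟩, ⟨_, _⟩, ⟨_, _⟩⟩ := h0
    rcases h1 with h1 | h1 | h1 | h1 | h1 <;> rcases h2 with h2 | h2 | h2 | h2 | h2 <;>
    first
    | (exfalso; linarith)
    | (left; ext <;> simp only <;> linarith)
    | (right; ext <;> simp only [Prod.fst_neg, Prod.snd_neg] <;> linarith)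

theorem dir3 : Dir (0, 1) (8 / 5, 1 / 4) := by
  constructor
  · norm_num [Gen]
  · norm_num [PC]
  · norm_num [PC]
  · norm_num [H, hc]
  · norm_num [H, hc]
  · norm_num [H, hc]
  · norm_num [H, hc]
  · norm_num [Prod.ext_iff]
  · rintro ⟨x, y⟩ h0 h1 h2
    have h1 := not_H h0 h1
    have h2 := not_H h0 h2
    norm_num [viol] at h1 h2
    simp only [PC] at h0
    obtain ⟨⟨_, _⟩, ⟨_, _⟩, ⟨_, _⟩, ⟨_, _⟩, ⟨_, _⟩⟩ := h0
    rcases h1 with h1 | h1 | h1 | h1 | h1 <;> rcases h2 with h2 | h2 | h2 | h2 | h2 <;>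
    first
    | (exfalso; linarith)
    | (left; ext <;> simp only <;> linarith)
    | (right; ext <;> simp only [Prod.fst_neg, Prod.snd_neg] <;> linarith)

theorem dir4 : Dir (-1, 1) (7 / 5, 3 / 4) := by
  constructor
  · norm_num [Gen]
  · norm_num [PC]
  · norm_num [PC]
  · norm_num [H, hc]
  · norm_num [H, hc]
  · norm_num [H, hc]
  · norm_num [H, hc]
  · norm_num [Prod.ext_iff]
  · rintro ⟨x, y⟩ h0 h1 h2
    have h1 := not_H h0 h1
    have h2 := not_H h0 h2
    norm_num [viol] at h1 h2
    simp only [PC] at h0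
    obtain ⟨⟨_, _⟩, ⟨_, _⟩, ⟨_, _⟩, ⟨_, _⟩, ⟨_, _⟩⟩ := h0
    rcases h1 with h1 | h1 | h1 | h1 | h1 <;> rcases h2 with h2 | h2 | h2 | h2 | h2 <;>
    first
    | (exfalso; linarith)
    | (left; ext <;> simp only <;> linarith)
    | (right; ext <;> simp only [Prod.fst_neg, Prod.snd_neg] <;> linarith)

theorem dir5 : Dir (1, 0) (3 / 5, 5 / 4) := by
  constructor
  · norm_num [Gen]
  · norm_num [PC]
  · norm_num [PC]
  · norm_num [H, hc]
  · norm_num [H, hc]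
  · norm_num [H, hc]
  · norm_num [H, hc]
  · norm_num [Prod.ext_iff]
  · rintro ⟨x, y⟩ h0 h1 h2
    have h1 := not_H h0 h1
    have h2 := not_H h0 h2
    norm_num [viol] at h1 h2
    simp only [PC] at h0
    obtain ⟨⟨_, _⟩, ⟨_, _⟩, ⟨_, _⟩, ⟨_, _⟩, ⟨_, _⟩⟩ := h0
    rcases h1 with h1 | h1 | h1 | h1 | h1 <;> rcases h2 with h2 | h2 | h2 | h2 | h2 <;>
    first
    | (exfalso; linarith)
    | (left; ext <;> simp only <;> linarith)
    | (right; ext <;> simp only [Prod.fst_neg, Prod.snd_neg] <;> linarith)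

section tiling

variable {ι : Type} {x : ι → ℝ × ℝ} {k : ℕ}

open Classical in
/-- exact half-open count -/
theorem count_H (hT : IsKFoldTranslativeTiling D₁₀ x k) {u : ℝ × ℝ} (hu : Gen u) (p : ℝ × ℝ)
    (S : Finset ι) (hS : ∀ i, ‖p - x i‖ ≤ 10 → i ∈ S) :
    (S.filter fun i => H u (p - x i)).card = k := by
  obtain ⟨hf, hcl, hop⟩ := hT
  have hB := hf (‖p‖ + ‖u‖ + 10)
  have ev : ∀ᶠ ε in nhdsWithin (0 : ℝ) (Set.Ioi 0), ∀ i ∈ {i : ι | ‖x i‖ ≤ ‖p‖ + ‖u‖ + 10},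
      (H u (p - x i) → PO (p - x i + ε • u)) ∧ (PC (p - x i + ε • u) → H u (p - x i)) :=
    (Filter.eventually_all_finite hB).2 fun i _ => ev_H hu _
  have ev1 : ∀ᶠ ε in nhdsWithin (0 : ℝ) (Set.Ioi 0), ε < 1 :=
    nhdsWithin_le_nhds (gt_mem_nhds one_pos)
  have ev0 : ∀ᶠ ε in nhdsWithin (0 : ℝ) (Set.Ioi 0), (0 : ℝ) < ε := self_mem_nhdsWithin
  obtain ⟨ε, he, he1, he0⟩ := (ev.and (ev1.and ev0)).exists
  have hsub : ∀ i, p + ε • u - x i = p - x i + ε • u := fun i => by abel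
  have hsmall : ‖ε • u‖ ≤ ‖u‖ := by
    rw [norm_smul, Real.norm_eq_abs, abs_of_pos he0]
    nlinarith [norm_nonneg u]
  have hnorm : ∀ i, ‖p - x i‖ ≤ ‖u‖ + 10 → ‖x i‖ ≤ ‖p‖ + ‖u‖ + 10 := by
    intro i hi
    have : ‖x i‖ ≤ ‖p‖ + ‖p - x i‖ := by
      have := norm_sub_le p (p - x i)
      simpa using this
    linarith
  apply le_antisymm
  · refine hop (p + ε • u) _ ?_
    intro i hi
    rw [Finset.mem_filter] at hi
    rw [mem_int, hsub]
    have h1 := (hi.2.PC hu).norm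
    exact (he i (hnorm i (by linarith [norm_nonneg u]))).1 hi.2
  · obtain ⟨s, hs, hs'⟩ := hcl (p + ε • u)
    refine hs.trans (Finset.card_le_card ?_)
    intro i hi
    have h1 := (mem_D _).1 (hs' i hi)
    rw [hsub] at h1
    have h2 := h1.norm
    have h3 : ‖p - x i‖ ≤ ‖u‖ + 10 := by
      have : ‖p - x i‖ ≤ ‖p - x i + ε • u‖ + ‖ε • u‖ := by
        have := norm_sub_le (p - x i + ε • u) (ε • u)
        simpa using this
      linarith
    have h4 := (he i (hnorm i h3)).2 h1
    rw [Finset.mem_filter]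
    exact ⟨hS i (by linarith [(h4.PC hu).norm]), h4⟩

/-- multiplicity -/
noncomputable def mult (x : ι → ℝ × ℝ) (q : ℝ × ℝ) : ℕ := Set.ncard {i | x i = q}

open Classical in
theorem mult_eq (q : ℝ × ℝ) (S : Finset ι) (hS : ∀ i, x i = q → i ∈ S) :
    mult x q = (S.filter fun i => x i = q).card := by
  rw [mult, ← Set.ncard_coe_finset]
  congr 1
  ext i
  simp only [Set.mem_ofPred_eq, Finset.coe_filter]
  exact ⟨fun h => ⟨hS i h, h⟩, fun h => h.2⟩

noncomputable def SS (hT : IsKFoldTranslativeTiling D₁₀ x k) (p : ℝ × ℝ) : Finset ι :=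
  (hT.1 (‖p‖ + 10)).toFinset

theorem mem_SS (hT : IsKFoldTranslativeTiling D₁₀ x k) (p : ℝ × ℝ) (i : ι)
    (h : ‖p - x i‖ ≤ 10) : i ∈ SS hT p := by
  simp only [SS, Set.Finite.mem_toFinset, Set.mem_ofPred_eq]
  have := norm_sub_le p (p - x i)
  simp only [sub_sub_cancel] at this
  linarith

theorem mult_le (hT : IsKFoldTranslativeTiling D₁₀ x k) (q : ℝ × ℝ) : mult x q ≤ k := by
  classical
  rw [mult_eq q (SS hT q) (fun i hi => mem_SS hT q i (by simp [hi]))]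
  refine hT.2.2 q _ fun i hi => ?_
  rw [(Finset.mem_filter.1 hi).2, mem_int]
  norm_num [PO]

open Classical in
theorem rel_V (hT : IsKFoldTranslativeTiling D₁₀ x k) {u V : ℝ × ℝ} (h : Dir u V) (p : ℝ × ℝ) :
    (mult x (p + V) : ℤ) + mult x (p - V) + 2 * k =
      ∑ i ∈ SS hT p, ((if PC (p - x i) then 1 else 0) + (if PO (p - x i) then (1 : ℤ) else 0)) := by
  have h1 := count_H hT h.gen p (SS hT p) (mem_SS hT p)
  have h2 := count_H hT h.gen.neg p (SS hT p) (mem_SS hT p)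
  have h3 := mult_eq (x := x) (p - V) (SS hT p) (fun i hi => mem_SS hT p i (by
    rw [hi, sub_sub_cancel]; linarith [h.pc.norm]))
  have h4 := mult_eq (x := x) (p + V) (SS hT p) (fun i hi => mem_SS hT p i (by
    rw [hi, sub_add_cancel_left]; linarith [h.pc'.norm]))
  have e3 : ∀ i, x i = p - V ↔ p - x i = V := fun i =>
    ⟨fun h => by rw [h]; abel, fun h => by rw [← h]; abel⟩
  have e4 : ∀ i, x i = p + V ↔ p - x i = -V := fun i =>
    ⟨fun h => by rw [h]; abel, fun h => by
      have h' : x i = p - (p - x i) := by abel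
      rw [h', h, sub_neg_eq_add]⟩
  rw [← Finset.sum_congr rfl (fun i _ => h.ident (p - x i))]
  simp only [Finset.sum_add_distrib, Finset.sum_boole]
  rw [h1, h2, h3, h4]
  simp only [e3, e4]
  ring

noncomputable def rv (v : ℤ × ℤ) : ℝ × ℝ := ((v.1 : ℝ) / 5, (v.2 : ℝ) / 4)

theorem rv_add (v w) : rv (v + w) = rv v + rv w := by
  ext <;> simp [rv] <;> ring

theorem rv_sub (v w) : rv (v - w) = rv v - rv w := by
  ext <;> simp [rv] <;> ring

theorem rel_VV (hT : IsKFoldTranslativeTiling D₁₀ x k) (i j : Fin 5) (p : ℝ × ℝ) :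
    (mult x (p + rv (VV i)) : ℤ) + mult x (p - rv (VV i)) =
      (mult x (p + rv (VV j)) : ℤ) + mult x (p - rv (VV j)) := by
  classical
  have key : ∀ i, (mult x (p + rv (VV i)) : ℤ) + mult x (p - rv (VV i)) + 2 * k =
      ∑ i ∈ SS hT p,
        ((if PC (p - x i) then 1 else 0) + (if PO (p - x i) then (1 : ℤ) else 0)) := by
    intro i
    fin_cases i
    · have e0 : VV 0 = (3, -3) := rfl
      have e : rv (VV 0) = (3 / 5, -(3 / 4)) := by norm_num [rv, e0]
      have := rel_V hT dir1 p
      rw [← e] at this; exact this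
    · have e0 : VV 1 = (7, -1) := rfl
      have e : rv (VV 1) = (7 / 5, -(1 / 4)) := by norm_num [rv, e0]
      have := rel_V hT dir2 p
      rw [← e] at this; exact this
    · have e0 : VV 2 = (8, 1) := rfl
      have e : rv (VV 2) = (8 / 5, 1 / 4) := by norm_num [rv, e0]
      have := rel_V hT dir3 p
      rw [← e] at this; exact this
    · have e0 : VV 3 = (7, 3) := rfl
      have e : rv (VV 3) = (7 / 5, 3 / 4) := by norm_num [rv, e0]
      have := rel_V hT dir4 p
      rw [← e] at this; exact this
    · have e0 : VV 4 = (3, 5) := rfl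
      have e : rv (VV 4) = (3 / 5, 5 / 4) := by norm_num [rv, e0]
      have := rel_V hT dir5 p
      rw [← e] at this; exact this
  linarith [key i, key j]

theorem mult_per (hT : IsKFoldTranslativeTiling D₁₀ x k) (p : ℝ × ℝ) :
    mult x (p + (2, 0)) = mult x p ∧ mult x (p + (0, 1)) = mult x p := by
  have hM : M (fun v => (mult x (p + rv v) : ℤ)) := by
    constructor
    · refine ⟨k, fun q => ?_⟩
      rw [Nat.abs_cast]
      exact_mod_cast mult_le hT _
    · intro i j q
      have := rel_VV hT i j (p + rv q)
      simpa only [rv_add, rv_sub, add_assoc, add_sub_assoc] using this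
  have h := hM.per 0
  have e0 : rv 0 = 0 := by simp [rv]
  have e1 : rv (10, 0) = (2, 0) := by norm_num [rv]
  have e2 : rv (0, 4) = (0, 1) := by norm_num [rv]
  simp only [zero_add, e0, e1, e2, add_zero] at h
  exact_mod_cast h

/-- periodic multiplicity -/
noncomputable def cc (x : ι → ℝ × ℝ) (q : ℝ × ℝ) : ℕ := mult x q + mult x (q + (1, 0))

theorem cc_z (hT : IsKFoldTranslativeTiling D₁₀ x k) (z : ℤ × ℤ) (q : ℝ × ℝ) :
    cc x (q + ((z.1 : ℝ), (z.2 : ℝ))) = cc x q := by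
  have h1 : ∀ q, cc x (q + (1, 0)) = cc x q := by
    intro q
    have := (mult_per hT q).1
    have e : q + (1, 0) + (1, 0) = q + ((2 : ℝ), (0 : ℝ)) := by
      rw [add_assoc]; norm_num
    simp only [cc, e, this, add_comm]
  have h2 : ∀ q, cc x (q + (0, 1)) = cc x q := by
    intro q
    simp only [cc, (mult_per hT q).2]
    rw [add_right_comm, (mult_per hT _).2]
  have h3 : ∀ (n : ℤ) q, cc x (q + ((n : ℝ), 0)) = cc x q := by
    intro n
    induction n using Int.induction_on with
    | zero => intro q; have : ((((0 : ℤ) : ℝ), (0 : ℝ)) : ℝ × ℝ) = 0 := by simp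
              rw [this, add_zero]
    | succ n ih =>
      intro q
      rw [← ih q, ← h1 (q + (((n : ℤ) : ℝ), 0)), add_assoc]
      congr 2; ext <;> simp
    | pred n ih =>
      intro q
      rw [← ih q, ← h1 (q + _), add_assoc]
      congr 2; ext <;> simp
  have h4 : ∀ (n : ℤ) q, cc x (q + (0, (n : ℝ))) = cc x q := by
    intro n
    induction n using Int.induction_on with
    | zero => intro q; have : (((0 : ℝ), ((0 : ℤ) : ℝ)) : ℝ × ℝ) = 0 := by simp
              rw [this, add_zero]
    | succ n ih =>
      intro q
      rw [← ih q, ← h2 (q + (0, ((n : ℤ) : ℝ))), add_assoc]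
      congr 2; ext <;> simp
    | pred n ih =>
      intro q
      rw [← ih q, ← h2 (q + _), add_assoc]
      congr 2; ext <;> simp
  have : (((z.1 : ℝ), (z.2 : ℝ)) : ℝ × ℝ) = ((z.1 : ℝ), 0) + (0, (z.2 : ℝ)) := by simp
  rw [this, ← add_assoc, h4, h3]

/-- representative in the unit square -/
noncomputable def rho (q : ℝ × ℝ) : ℝ × ℝ := (Int.fract q.1, Int.fract q.2)

theorem rho_spec (q : ℝ × ℝ) : q = rho q + (((⌊q.1⌋ : ℤ) : ℝ), ((⌊q.2⌋ : ℤ) : ℝ)) := by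
  ext <;> simp [rho]

theorem rho_add (q : ℝ × ℝ) (z : ℤ × ℤ) : rho (q + ((z.1 : ℝ), (z.2 : ℝ))) = rho q := by
  simp [rho]

theorem rho_rho (q : ℝ × ℝ) : rho (rho q) = rho q := by simp [rho]

theorem gen_one : Gen (1, 0) := by norm_num [Gen]

theorem five_dvd (hT : IsKFoldTranslativeTiling D₁₀ x k) : 5 ∣ 2 * k := by
  classical
  obtain ⟨T, hT1⟩ : ∃ T : Finset (ℝ × ℝ), ∀ q, q ∈ T ↔ H (1, 0) (-q) ∧ cc x q ≠ 0 := by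
    have hfin : {q : ℝ × ℝ | H (1, 0) (-q) ∧ cc x q ≠ 0}.Finite := by
      refine Set.Finite.subset (((hT.1 20).image x).union
        ((hT.1 20).image (fun i => x i - (1, 0)))) ?_
      rintro q ⟨h1, h2⟩
      have hn := (h1.PC gen_one).norm
      rw [norm_neg] at hn
      have : mult x q ≠ 0 ∨ mult x (q + (1, 0)) ≠ 0 := by
        simp only [cc] at h2; omega
      rcases this with h | h
      · left
        obtain ⟨i, hi⟩ := Set.nonempty_of_ncard_ne_zero h
        have hi : x i = q := hi
        exact ⟨i, by simp only [Set.mem_ofPred_eq, hi]; linarith, hi⟩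
      · right
        obtain ⟨i, hi⟩ := Set.nonempty_of_ncard_ne_zero h
        have hi : x i = q + (1, 0) := hi
        refine ⟨i, ?_, by simp [hi]⟩
        simp only [Set.mem_ofPred_eq, hi]
        have h5 := norm_add_le q ((1 : ℝ), (0 : ℝ))
        have h6 : ‖((1 : ℝ), (0 : ℝ))‖ = 1 := by simp [Prod.norm_def]
        linarith
    exact ⟨hfin.toFinset, fun q => by simp⟩
  have k1 : k = ∑ q ∈ T, mult x q := by
    have h := count_H hT gen_one 0 (SS hT 0) (mem_SS hT 0)
    rw [Finset.card_eq_sum_card_fiberwise (f := x) (t := T)] at h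
    · rw [← h]
      refine Finset.sum_congr rfl fun q hq => ?_
      rw [mult_eq q (SS hT 0) fun i hi => mem_SS hT 0 i ?_, Finset.filter_filter]
      · congr 1
        ext i
        simp only [Finset.mem_filter, zero_sub]
        constructor
        · rintro ⟨h1, h2, h3⟩; exact ⟨h1, h3⟩
        · rintro ⟨h1, h3⟩; exact ⟨h1, by rw [h3]; exact ((hT1 q).1 hq).1, h3⟩
      · rw [hi, zero_sub]
        linarith [(((hT1 q).1 hq).1.PC gen_one).norm]
    · intro i hi
      rw [Finset.mem_coe, Finset.mem_filter, zero_sub] at hi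
      rw [Finset.mem_coe, hT1]
      refine ⟨hi.2, ?_⟩
      have : mult x (x i) ≠ 0 := by
        rw [mult_eq (x i) (SS hT (x i)) fun j hj => mem_SS hT _ j (by simp [hj])]
        exact Finset.card_ne_zero_of_mem (Finset.mem_filter.2 ⟨mem_SS hT _ i (by simp), rfl⟩)
      simp only [cc]; omega
  have k2 : k = ∑ q ∈ T, mult x (q + (1, 0)) := by
    have h := count_H hT gen_one (1, 0) (SS hT (1, 0)) (mem_SS hT (1, 0))
    rw [Finset.card_eq_sum_card_fiberwise (f := fun i => x i - (1, 0)) (t := T)] at h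
    · rw [← h]
      refine Finset.sum_congr rfl fun q hq => ?_
      rw [mult_eq (q + (1, 0)) (SS hT (1, 0)) fun i hi => mem_SS hT (1, 0) i ?_,
        Finset.filter_filter]
      · congr 1
        ext i
        simp only [Finset.mem_filter, sub_eq_iff_eq_add]
        constructor
        · rintro ⟨h1, h2, h3⟩; exact ⟨h1, h3⟩
        · rintro ⟨h1, h3⟩
          refine ⟨h1, ?_, h3⟩
          rw [h3, sub_add_cancel_right]; exact ((hT1 q).1 hq).1
      · rw [hi, sub_add_cancel_right]
        linarith [(((hT1 q).1 hq).1.PC gen_one).norm]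
    · intro i hi
      rw [Finset.mem_coe, Finset.mem_filter] at hi
      rw [Finset.mem_coe, hT1]
      refine ⟨by rw [neg_sub]; exact hi.2, ?_⟩
      have : mult x (x i) ≠ 0 := by
        rw [mult_eq (x i) (SS hT (x i)) fun j hj => mem_SS hT _ j (by simp [hj])]
        exact Finset.card_ne_zero_of_mem (Finset.mem_filter.2 ⟨mem_SS hT _ i (by simp), rfl⟩)
      simp only [cc, sub_add_cancel]; omega
  have k3 : 2 * k = ∑ q ∈ T, cc x q := by
    simp only [cc, Finset.sum_add_distrib]
    omega
  have crho : ∀ q, cc x (rho q) = cc x q := by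
    intro q
    have := cc_z hT (⌊q.1⌋, ⌊q.2⌋) (rho q)
    simp only at this
    rw [← rho_spec] at this
    exact this.symm
  rw [k3, ← Finset.sum_fiberwise_of_maps_to (g := rho) (t := T.image rho)
    (fun q hq => Finset.mem_image_of_mem _ hq)]
  refine Finset.dvd_sum fun r hr => ?_
  obtain ⟨q0, hq0, rfl⟩ := Finset.mem_image.1 hr
  have hne : cc x (rho q0) ≠ 0 := by rw [crho]; exact ((hT1 q0).1 hq0).2
  rw [Finset.sum_congr rfl (g := fun _ => cc x (rho q0))]
  · rw [Finset.sum_const, smul_eq_mul]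
    refine Dvd.dvd.mul_right ?_ _
    obtain ⟨s, hs5, hs⟩ := count5 (-rho q0)
    have : T.filter (fun q => rho q = rho q0) =
        s.image (fun z : ℤ × ℤ => rho q0 + ((z.1 : ℝ), (z.2 : ℝ))) := by
      ext q
      simp only [Finset.mem_filter, Finset.mem_image]
      constructor
      · rintro ⟨h1, h2⟩
        refine ⟨(⌊q.1⌋, ⌊q.2⌋), ?_, ?_⟩
        · rw [hs, ← h2, ← neg_add', ← rho_spec]
          exact ((hT1 q).1 h1).1
        · rw [← h2]; exact (rho_spec q).symm
      · rintro ⟨z, hz, rfl⟩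
        refine ⟨?_, by rw [rho_add, rho_rho]⟩
        rw [hT1, cc_z hT]
        refine ⟨?_, hne⟩
        rw [neg_add']; exact (hs z).1 hz
    rw [this, Finset.card_image_of_injective, hs5]
    rintro ⟨a, b⟩ ⟨c, d⟩ h
    simpa using h
  · intro q hq
    rw [← (Finset.mem_filter.1 hq).2, crho]

end tiling

end Dec

/-- `D₁₀ + ℤ²` is a five-fold translative tiling of the plane, and `D₁₀` admits no
`k`-fold translative tiling for any `k ≤ 4`; hence `τ(D₁₀) = 5`. -/
theorem decagon_tau_five :
    IsKFoldTranslativeTiling D₁₀ (fun z : ℤ × ℤ => (((z.1 : ℝ), (z.2 : ℝ)) : ℝ × ℝ)) 5 ∧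
    ∀ (k : ℕ), 0 < k → k ≤ 4 →
      ∀ (ι : Type) (x : ι → ℝ × ℝ), ¬ IsKFoldTranslativeTiling D₁₀ x k := by
  refine ⟨Dec.part1, fun k hk hk4 ι x hT => ?_⟩
  have := Dec.five_dvd hT
  omega
end

section
/- Let P be a centrally symmetric convex dodecagon (a convex polygon with exactly 12 vertices, symmetric about a point). If P admits a k-fold translative tiling of the plane for some positive integer k, then k ≥ 6; that is, τ(P) ≥ 6. -/
open Pointwise

/-- planar cross product -/
def crx (a b : ℝ × ℝ) : ℝ := a.1 * b.2 - a.2 * b.1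

structure ESys (e : ℤ → ℝ × ℝ) : Prop where
  he : ∀ i, e (i + 6) = - e i
  hc : ∀ i j, i < j → j < i + 6 → 0 < crx (e i) (e j)

noncomputable def ept (e : ℤ → ℝ × ℝ) (j : ℤ) : ℝ × ℝ :=
  (-(1/2 : ℝ)) • (e j + e (j+1) + e (j+2) + e (j+3) + e (j+4) + e (j+5))

noncomputable def eL (e : ℤ → ℝ × ℝ) (j : ℤ) (u : ℝ × ℝ) : ℝ := crx (e j) (u - ept e j)

def eZ (e : ℤ → ℝ × ℝ) : Set (ℝ × ℝ) := {u | ∀ j, 0 ≤ eL e j u}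
def eZi (e : ℤ → ℝ × ℝ) : Set (ℝ × ℝ) := {u | ∀ j, 0 < eL e j u}

lemma ESys.shift {e : ℤ → ℝ × ℝ} (h : ESys e) (n : ℤ) : ESys (fun i => e (i + n)) := by
  refine ⟨fun i => ?_, fun i j h1 h2 => h.hc _ _ (by linarith) (by linarith)⟩
  have := h.he (i + n)
  rw [← this]; congr 1; ring

lemma ept_shift (e : ℤ → ℝ × ℝ) (n j : ℤ) : ept (fun i => e (i + n)) j = ept e (j + n) := by
  simp only [ept]
  congr 1
  have h (s : ℤ) : j + s + n = j + n + s := by ring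
  simp only [h]

lemma eL_shift (e : ℤ → ℝ × ℝ) (n j : ℤ) (u : ℝ × ℝ) :
    eL (fun i => e (i + n)) j u = eL e (j + n) u := by
  simp only [eL, ept_shift]

lemma eZ_shift (e : ℤ → ℝ × ℝ) (n : ℤ) : eZ (fun i => e (i + n)) = eZ e := by
  ext u
  simp only [eZ, Set.mem_ofPred_eq, eL_shift]
  exact ⟨fun h j => by simpa using h (j - n), fun h j => h _⟩

lemma eZi_shift (e : ℤ → ℝ × ℝ) (n : ℤ) : eZi (fun i => e (i + n)) = eZi e := by
  ext u
  simp only [eZi, Set.mem_ofPred_eq, eL_shift]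
  exact ⟨fun h j => by simpa using h (j - n), fun h j => h _⟩

lemma ESys.he12 {e : ℤ → ℝ × ℝ} (h : ESys e) (i : ℤ) : e (i + 12) = e i := by
  have h1 := h.he (i + 6)
  have h2 := h.he i
  rw [show i + 12 = i + 6 + 6 by ring, h1, h2, neg_neg]

lemma ESys.ept_succ {e : ℤ → ℝ × ℝ} (h : ESys e) (j : ℤ) : ept e (j + 1) = ept e j + e j := by
  have h2 := h.he j
  simp only [ept]
  rw [show j + 1 + 1 = j + 2 by ring, show j + 1 + 2 = j + 3 by ring, show j + 1 + 3 = j + 4 by ring,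
    show j + 1 + 4 = j + 5 by ring, show j + 1 + 5 = j + 6 by ring, h2]
  ext <;> simp <;> ring

lemma ESys.ept_six {e : ℤ → ℝ × ℝ} (h : ESys e) (j : ℤ) : ept e (j + 6) = - ept e j := by
  simp only [ept]
  rw [h.he j, show j + 6 + 1 = j + 1 + 6 by ring, show j + 6 + 2 = j + 2 + 6 by ring,
    show j + 6 + 3 = j + 3 + 6 by ring, show j + 6 + 4 = j + 4 + 6 by ring,
    show j + 6 + 5 = j + 5 + 6 by ring]
  simp only [h.he]
  ext <;> simp <;> ring

lemma ESys.ept12 {e : ℤ → ℝ × ℝ} (h : ESys e) (j : ℤ) : ept e (j + 12) = ept e j := by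
  rw [show j + 12 = j + 6 + 6 by ring, h.ept_six, h.ept_six, neg_neg]

lemma ESys.eL12 {e : ℤ → ℝ × ℝ} (h : ESys e) (j : ℤ) (u) : eL e (j + 12) u = eL e j u := by
  simp only [eL, h.he12, h.ept12]

lemma per12 {Q : ℤ → Prop} (hQ : ∀ l, Q (l + 12) ↔ Q l) (j : ℤ)
    (h : ∀ l, j ≤ l → l < j + 12 → Q l) (l : ℤ) : Q l := by
  have key : ∀ n : ℕ, ∀ l, (Q (l + 12 * n) ↔ Q l) := by
    intro n
    induction n with
    | zero => intro l; simp
    | succ n ih =>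
      intro l
      rw [show l + 12 * ((n + 1 : ℕ) : ℤ) = (l + 12 * n) + 12 by push_cast; ring, hQ, ih]
  have h0 := h (j + (l - j) % 12) (by omega) (by omega)
  rcases le_total 0 ((l - j) / 12) with hd | hd
  · obtain ⟨n, hn⟩ := Int.eq_ofNat_of_zero_le hd
    rw [← key n] at h0
    convert h0 using 1
    omega
  · obtain ⟨n, hn⟩ := Int.eq_ofNat_of_zero_le (show 0 ≤ -((l - j) / 12) by omega)
    rw [← key n]
    convert h0 using 1
    omega

lemma ESys.six {e : ℤ → ℝ × ℝ} (h : ESys e) :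
    e 6 = - e 0 ∧ e 7 = - e 1 ∧ e 8 = - e 2 ∧ e 9 = - e 3 ∧ e 10 = - e 4 ∧ e 11 = - e 5 ∧
    e 12 = e 0 ∧ e 13 = e 1 ∧ e 14 = e 2 ∧ e 15 = e 3 ∧ e 16 = e 4 := by
  refine ⟨h.he 0, h.he 1, h.he 2, h.he 3, h.he 4, h.he 5, h.he12 0, h.he12 1, h.he12 2, h.he12 3, h.he12 4⟩

lemma ESys.pos {e : ℤ → ℝ × ℝ} (h : ESys e) :
    (0 < crx (e 0) (e 1) ∧ 0 < crx (e 0) (e 2) ∧ 0 < crx (e 0) (e 3) ∧ 0 < crx (e 0) (e 4) ∧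
     0 < crx (e 0) (e 5)) ∧ (0 < crx (e 1) (e 2) ∧ 0 < crx (e 1) (e 3) ∧ 0 < crx (e 1) (e 4) ∧
     0 < crx (e 1) (e 5)) ∧ (0 < crx (e 2) (e 3) ∧ 0 < crx (e 2) (e 4) ∧ 0 < crx (e 2) (e 5)) ∧
     (0 < crx (e 3) (e 4) ∧ 0 < crx (e 3) (e 5)) ∧ 0 < crx (e 4) (e 5) := by
  refine ⟨⟨?_, ?_, ?_, ?_, ?_⟩, ⟨?_, ?_, ?_, ?_⟩, ⟨?_, ?_, ?_⟩, ⟨?_, ?_⟩, ?_⟩ <;>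
    exact h.hc _ _ (by norm_num) (by norm_num)

lemma ESys.L_pt0 {e : ℤ → ℝ × ℝ} (h : ESys e) :
    eL e 0 (ept e 0) = 0 ∧ eL e 11 (ept e 0) = 0 ∧
    ∀ l : ℤ, 0 < l → l < 11 → 0 < eL e l (ept e 0) := by
  obtain ⟨h6, h7, h8, h9, h10, h11, h12, h13, h14, h15, h16⟩ := h.six
  obtain ⟨⟨c1, c2, c3, c4, c5⟩, ⟨d2, d3, d4, d5⟩, ⟨f3, f4, f5⟩, ⟨g4, g5⟩, k5⟩ := h.pos
  simp only [crx] at *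
  refine ⟨?_, ?_, ?_⟩
  · simp [eL, crx]
  · simp only [eL, ept, crx]
    norm_num [h6, h7, h8, h9, h10, h11, h12, h13, h14, h15, h16]
    ring
  · intro l h1 h2
    interval_cases l <;> simp only [eL, ept, crx] <;>
    norm_num [h6, h7, h8, h9, h10, h11, h12, h13, h14, h15, h16] <;> linarith

lemma ESys.L_pt {e : ℤ → ℝ × ℝ} (h : ESys e) (j : ℤ) :
    eL e j (ept e j) = 0 ∧ eL e (j + 11) (ept e j) = 0 ∧
    ∀ l : ℤ, j < l → l < j + 11 → 0 < eL e l (ept e j) := by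
  have := (h.shift j).L_pt0
  simp only [eL_shift, ept_shift] at this
  obtain ⟨h1, h2, h3⟩ := this
  simp only [zero_add] at h1 h2 h3
  refine ⟨h1, by rwa [add_comm], fun l hl hl' => ?_⟩
  have := h3 (l - j) (by linarith) (by linarith)
  simpa using this

lemma ESys.pt_mem {e : ℤ → ℝ × ℝ} (h : ESys e) (j : ℤ) : ept e j ∈ eZ e := by
  refine per12 (fun l => by rw [h.eL12]) j ?_
  intro l h1 h2
  obtain ⟨g1, g2, g3⟩ := h.L_pt j
  rcases eq_or_lt_of_le h1 with rfl | h1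
  · exact g1.ge
  · rcases eq_or_lt_of_le (show l ≤ j + 11 by linarith) with rfl | h3
    · exact g2.ge
    · exact (g3 l h1 h3).le

lemma eL_comb (e : ℤ → ℝ × ℝ) (l : ℤ) (u w : ℝ × ℝ) (t : ℝ) :
    eL e l ((1 - t) • u + t • w) = (1 - t) * eL e l u + t * eL e l w := by
  simp [eL, crx]; ring

lemma eL_add (e : ℤ → ℝ × ℝ) (l : ℤ) (u d : ℝ × ℝ) (t : ℝ) :
    eL e l (u + t • d) = eL e l u + t * crx (e l) d := by
  simp [eL, crx]; ring

set_option maxHeartbeats 2000000 in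
/-- vertex chord -/
lemma ESys.chord_v0 {e : ℤ → ℝ × ℝ} (h : ESys e) (i : ℤ) (h1 : 0 < i) (h2 : i < 5) :
    ept e 0 + e i ∈ eZi e := by
  refine per12 (fun l => by rw [h.eL12]) 0 ?_
  obtain ⟨h6, h7, h8, h9, h10, h11, h12, h13, h14, h15, h16⟩ := h.six
  obtain ⟨⟨c1, c2, c3, c4, c5⟩, ⟨d2, d3, d4, d5⟩, ⟨f3, f4, f5⟩, ⟨g4, g5⟩, k5⟩ := h.pos
  simp only [crx] at *
  intro l hl1 hl2
  interval_cases l <;> interval_cases i <;> simp only [eL, ept, crx] <;>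
    norm_num [h6, h7, h8, h9, h10, h11, h12, h13, h14, h15, h16] <;> linarith

lemma ESys.chord_v {e : ℤ → ℝ × ℝ} (h : ESys e) (j i : ℤ) (h1 : j < i) (h2 : i < j + 5) :
    ept e j + e i ∈ eZi e := by
  have := (h.shift j).chord_v0 (i - j) (by linarith) (by linarith)
  rw [eZi_shift, ept_shift] at this
  simpa using this

lemma ESys.chord_e {e : ℤ → ℝ × ℝ} (h : ESys e) (j i : ℤ) (h1 : j < i) (h2 : i < j + 6) (t : ℝ)
    (ht0 : 0 < t) (ht1 : t < 1) : ept e j + t • e j + e i ∈ eZi e := by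
  have key : ept e j + t • e j + e i = (1 - t) • (ept e j + e i) + t • (ept e (j+1) + e i) := by
    rw [h.ept_succ]; ext <;> simp <;> ring
  rw [key]
  intro l
  rw [eL_comb]
  by_cases hi : i = j + 1
  · subst hi
    have a1 := h.chord_v j (j+1) h1 (by linarith) l
    have a2 : ept e (j+1) + e (j+1) ∈ eZ e := by rw [← h.ept_succ]; exact h.pt_mem _
    have a2 := a2 l
    have : 0 < (1 - t) := by linarith
    positivity
  · have a1 := h.chord_v (j+1) i (by omega) (by linarith) l
    have a2 : ept e j + e i ∈ eZ e := by
      by_cases hi2 : i = j + 5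
      · have : ept e j + e i = ept e (j + 11) := by
          have q1 := h.ept_succ (j+11)
          rw [show j + 11 + 1 = j + 12 by ring, h.ept12, show j + 11 = j + 5 + 6 by ring, h.he] at q1
          rw [q1, hi2, show j + 11 = j + 5 + 6 by ring]; simp
        rw [this]; exact h.pt_mem _
      · exact fun l => (h.chord_v j i h1 (by omega) l).le
    have a2 := a2 l
    have : 0 < (1 - t) := by linarith
    positivity

lemma crx_par (a b : ℝ × ℝ) (ha : a ≠ 0) (h : crx a b = 0) : ∃ t : ℝ, b = t • a := by
  simp only [crx] at h
  by_cases h1 : a.1 = 0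
  · have h2 : a.2 ≠ 0 := fun h2 => ha (Prod.ext h1 h2)
    have h3 : b.1 = 0 := by
      rw [h1] at h
      have : a.2 * b.1 = 0 := by linarith
      exact (mul_eq_zero.mp this).resolve_left h2
    refine ⟨b.2 / a.2, ?_⟩
    ext
    · simp [h1, h3]
    · simp; field_simp
  · refine ⟨b.1 / a.1, ?_⟩
    ext
    · simp; field_simp
    · simp; field_simp; linarith

lemma ESys.ne_zero {e : ℤ → ℝ × ℝ} (h : ESys e) (j : ℤ) : e j ≠ 0 := by
  intro h0
  have := h.hc j (j+1) (by linarith) (by linarith)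
  simp [h0, crx] at this

lemma ESys.classify {e : ℤ → ℝ × ℝ} (h : ESys e) (u : ℝ × ℝ) (hu : u ∈ eZ e) :
    u ∈ eZi e ∨ ∃ j : ℤ, u = ept e j ∨ ∃ t : ℝ, 0 < t ∧ t < 1 ∧ u = ept e j + t • e j := by
  by_cases hi : u ∈ eZi e
  · exact Or.inl hi
  right
  simp only [eZi, Set.mem_ofPred_eq, not_forall, not_lt] at hi
  obtain ⟨j, hj⟩ := hi
  have hj0 : eL e j u = 0 := le_antisymm hj (hu j)
  obtain ⟨t, ht⟩ := crx_par _ _ (h.ne_zero j) hj0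
  have hut : u = ept e j + t • e j := by rw [← ht]; simp
  have c1 := h.hc j (j+1) (by linarith) (by linarith)
  have c2 := h.hc (j-1) j (by linarith) (by linarith)
  have t1 : t ≤ 1 := by
    have q := hu (j+1)
    have : eL e (j+1) u = (1 - t) * crx (e j) (e (j+1)) := by
      rw [hut]; simp only [eL, crx, h.ept_succ]; simp; ring
    rw [this] at q
    nlinarith
  have t0 : 0 ≤ t := by
    have q := hu (j-1)
    have : eL e (j-1) u = t * crx (e (j-1)) (e j) := by
      have q := h.ept_succ (j-1)
      rw [sub_add_cancel] at q
      rw [hut]; simp only [eL, crx, q]; simp; ring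
    rw [this] at q
    nlinarith
  rcases eq_or_lt_of_le t0 with t0 | t0
  · refine ⟨j, Or.inl ?_⟩; rw [hut, ← t0]; simp
  rcases eq_or_lt_of_le t1 with t1 | t1
  · refine ⟨j+1, Or.inl ?_⟩; rw [hut, t1, h.ept_succ]; simp
  exact ⟨j, Or.inr ⟨t, t0, t1, hut⟩⟩

lemma crx_decomp (a b u : ℝ × ℝ) (h : crx a b ≠ 0) :
    u = (crx u b / crx a b) • a + (crx a u / crx a b) • b := by
  ext
  · simp only [Prod.fst_add, Prod.smul_fst, smul_eq_mul]
    rw [div_mul_eq_mul_div, div_mul_eq_mul_div, ← add_div, eq_div_iff h]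
    simp only [crx]; ring
  · simp only [Prod.snd_add, Prod.smul_snd, smul_eq_mul]
    rw [div_mul_eq_mul_div, div_mul_eq_mul_div, ← add_div, eq_div_iff h]
    simp only [crx]; ring

lemma crx_anti (a b : ℝ × ℝ) : crx a b = - crx b a := by simp only [crx]; ring

lemma ESys.crx_pt {e : ℤ → ℝ × ℝ} (h : ESys e) (j : ℤ) : 0 < crx (ept e j) (ept e (j+1)) := by
  have key : ∀ e : ℤ → ℝ × ℝ, ESys e → 0 < crx (ept e 0) (ept e 1) := by
    intro e h
    have q := h.ept_succ 0
    rw [zero_add] at q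
    obtain ⟨⟨c1, c2, c3, c4, c5⟩, -⟩ := h.pos
    rw [q]
    simp only [crx, ept] at *
    norm_num
    linarith
  have := key _ (h.shift j)
  rw [ept_shift, ept_shift, zero_add, add_comm] at this
  exact this

lemma ESys.locate {e : ℤ → ℝ × ℝ} (h : ESys e) (u : ℝ × ℝ) :
    ∃ j : ℤ, ∃ a b : ℝ, 0 ≤ a ∧ 0 ≤ b ∧ u = a • ept e j + b • ept e (j+1) := by
  have h6 : ∀ j, crx (ept e (j+6)) u = - crx (ept e j) u := by
    intro j; rw [h.ept_six]; simp [crx]; ring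
  have hex : ∃ j, 0 ≤ crx (ept e j) u ∧ crx (ept e (j+1)) u ≤ 0 := by
    by_contra hcon
    push Not at hcon
    have fin : ∀ j, 0 ≤ crx (ept e j) u → False := by
      intro j hj
      have a1 := hcon _ hj
      have a2 := hcon _ a1.le
      have a3 := hcon _ a2.le
      have a4 := hcon _ a3.le
      have a5 := hcon _ a4.le
      have a6 := hcon _ a5.le
      rw [show j + 1 + 1 + 1 + 1 + 1 + 1 = j + 6 by ring, h6] at a6
      linarith
    rcases le_total 0 (crx (ept e 0) u) with h0 | h0
    · exact fin _ h0
    · exact fin (0 + 6) (by rw [h6]; linarith)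
  obtain ⟨j, h1, h2⟩ := hex
  have D := h.crx_pt j
  refine ⟨j, crx u (ept e (j+1)) / crx (ept e j) (ept e (j+1)),
    crx (ept e j) u / crx (ept e j) (ept e (j+1)), div_nonneg (by rw [crx_anti]; linarith) D.le,
    div_nonneg h1 D.le, crx_decomp _ _ _ D.ne'⟩

lemma eL_cone {e : ℤ → ℝ × ℝ} (h : ESys e) (j : ℤ) (a b : ℝ) :
    eL e j (a • ept e j + b • ept e (j+1)) = (1 - a - b) * crx (ept e j) (ept e (j+1)) := by
  rw [h.ept_succ]
  simp [eL, crx]; ring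

noncomputable def eU (e : ℤ → ℝ × ℝ) (t : ℤ → ℝ) (j : ℤ) : ℝ × ℝ :=
  t j • e j + t (j+1) • e (j+1) + t (j+2) • e (j+2) + t (j+3) • e (j+3) + t (j+4) • e (j+4)
    + t (j+5) • e (j+5)

lemma eU_succ {e : ℤ → ℝ × ℝ} (h : ESys e) {t : ℤ → ℝ} (ht : ∀ n, t (n+6) = - t n) (j : ℤ) :
    eU e t (j+1) = eU e t j := by
  simp only [eU]
  rw [show j + 1 + 1 = j + 2 by ring, show j + 1 + 2 = j + 3 by ring, show j + 1 + 3 = j + 4 by ring,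
    show j + 1 + 4 = j + 5 by ring, show j + 1 + 5 = j + 6 by ring, h.he, ht, neg_smul_neg]
  abel

lemma eU_const {e : ℤ → ℝ × ℝ} (h : ESys e) {t : ℤ → ℝ} (ht : ∀ n, t (n+6) = - t n) (j : ℤ) :
    eU e t j = eU e t 0 := by
  induction j using Int.induction_on with
  | zero => rfl
  | succ i ih => rw [eU_succ h ht, ih]
  | pred i ih =>
    rw [← ih, ← eU_succ h ht]; congr 1; ring

lemma eL_eU {e : ℤ → ℝ × ℝ} (h : ESys e) {t : ℤ → ℝ} (ht : ∀ n, t (n+6) = - t n) (j : ℤ) :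
    eL e j (eU e t 0) = (t (j+1) + 1/2) * crx (e j) (e (j+1)) + (t (j+2) + 1/2) * crx (e j) (e (j+2))
      + (t (j+3) + 1/2) * crx (e j) (e (j+3)) + (t (j+4) + 1/2) * crx (e j) (e (j+4))
      + (t (j+5) + 1/2) * crx (e j) (e (j+5)) := by
  rw [← eU_const h ht j]
  simp only [eL, eU, ept, crx]
  simp
  ring

/-- interior criterion for zonogon representations -/
lemma eU_mem {e : ℤ → ℝ × ℝ} (h : ESys e) {t : ℤ → ℝ} (ht : ∀ n, t (n+6) = - t n)
    (hb : ∀ n, -(1/2) ≤ t n) (h3 : -(1/2) < t 3) (h3' : t 3 < 1/2)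
    (h4 : -(1/2) < t 4) (h4' : t 4 < 1/2) : eU e t 0 ∈ eZi e := by
  refine per12 (fun l => by rw [h.eL12]) 0 ?_
  intro j hj1 hj2
  rw [eL_eU h ht]
  have c1 := h.hc j (j+1) (by linarith) (by linarith)
  have c2 := h.hc j (j+2) (by linarith) (by linarith)
  have c3 := h.hc j (j+3) (by linarith) (by linarith)
  have c4 := h.hc j (j+4) (by linarith) (by linarith)
  have c5 := h.hc j (j+5) (by linarith) (by linarith)
  have p1 : 0 ≤ t (j+1) + 1/2 := by linarith [hb (j+1)]
  have p2 : 0 ≤ t (j+2) + 1/2 := by linarith [hb (j+2)]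
  have p3 : 0 ≤ t (j+3) + 1/2 := by linarith [hb (j+3)]
  have p4 : 0 ≤ t (j+4) + 1/2 := by linarith [hb (j+4)]
  have p5 : 0 ≤ t (j+5) + 1/2 := by linarith [hb (j+5)]
  have h9 : t 9 = - t 3 := ht 3
  have h10 : t 10 = - t 4 := ht 4
  have h15 : t 15 = t 3 := by rw [show (15:ℤ) = 9 + 6 by norm_num, ht, h9, neg_neg]
  have h16 : t 16 = t 4 := by rw [show (16:ℤ) = 10 + 6 by norm_num, ht, h10, neg_neg]
  have : 0 < t (j+1) + 1/2 ∨ 0 < t (j+2) + 1/2 ∨ 0 < t (j+3) + 1/2 ∨ 0 < t (j+4) + 1/2 ∨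
      0 < t (j+5) + 1/2 := by
    have r3 : 0 < t 3 + 1/2 := by linarith
    have r4 : 0 < t 4 + 1/2 := by linarith
    have r9 : 0 < t 9 + 1/2 := by linarith
    have r10 : 0 < t 10 + 1/2 := by linarith
    have r15 : 0 < t 15 + 1/2 := by linarith
    have r16 : 0 < t 16 + 1/2 := by linarith
    interval_cases j <;> norm_num at * <;> tauto
  rcases this with q | q | q | q | q <;> positivity

noncomputable def eT (n : ℤ) : ℝ := if n % 12 < 6 then -(1/2) else 1/2

lemma eT_six (n : ℤ) : eT (n + 6) = - eT n := by
  simp only [eT]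
  by_cases h : n % 12 < 6
  · rw [if_pos h, if_neg (by omega)]; ring
  · rw [if_neg h, if_pos (by omega)]

lemma eT_abs (n : ℤ) : -(1/2) ≤ eT n ∧ eT n ≤ 1/2 := by
  simp only [eT]; split_ifs <;> norm_num

lemma ept_eU {e : ℤ → ℝ × ℝ} (h : ESys e) (j : ℤ) : ept e j = eU e (fun n => eT (n - j)) 0 := by
  rw [← eU_const h (t := fun n => eT (n - j)) (fun n => by
    rw [show n + 6 - j = n - j + 6 by ring, eT_six]) j]
  simp only [ept, eU]
  have : ∀ s : ℤ, 0 ≤ s → s < 6 → eT (j + s - j) = -(1/2) := by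
    intro s h1 h2
    simp only [eT]; rw [if_pos (by omega)]
  have h0 := this 0 (by norm_num) (by norm_num)
  rw [add_zero] at h0
  rw [h0, this 1 (by norm_num) (by norm_num), this 2 (by norm_num) (by norm_num),
    this 3 (by norm_num) (by norm_num), this 4 (by norm_num) (by norm_num),
    this 5 (by norm_num) (by norm_num)]
  simp only [smul_add]

lemma ESys.rep {e : ℤ → ℝ × ℝ} (h : ESys e) (u : ℝ × ℝ) (hu : u ∈ eZi e) :
    ∃ t : ℤ → ℝ, (∀ n, t (n+6) = - t n) ∧ (∀ n, -(1/2) < t n) ∧ u = eU e t 0 := by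
  obtain ⟨j, a, b, ha, hb, rfl⟩ := h.locate u
  have hj := hu j
  rw [eL_cone h] at hj
  have hab : 0 < 1 - a - b := by
    have := h.crx_pt j
    by_contra hcon
    nlinarith
  refine ⟨fun n => a * eT (n - j) + b * eT (n - (j+1)), ?_, ?_, ?_⟩
  · intro n
    simp only
    rw [show n + 6 - j = n - j + 6 by ring, show n + 6 - (j+1) = n - (j+1) + 6 by ring, eT_six, eT_six]
    ring
  · intro n
    have h1 := (eT_abs (n - j)).1
    have h2 := (eT_abs (n - (j+1))).1
    simp only
    nlinarith
  · rw [ept_eU h, ept_eU h]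
    simp only [eU, add_smul, smul_add, mul_smul]
    abel

noncomputable def eExt (t0 t1 t2 : ℝ) (t : ℤ → ℝ) (n : ℤ) : ℝ :=
  if n % 12 = 0 then t0 else if n % 12 = 1 then t1 else if n % 12 = 2 then t2
  else if n % 12 = 6 then -t0 else if n % 12 = 7 then -t1 else if n % 12 = 8 then -t2 else t n

lemma ESys.triple_aux {e : ℤ → ℝ × ℝ} (h : ESys e) {t : ℤ → ℝ} (ht : ∀ n, t (n+6) = - t n)
    (hb : ∀ n, -(1/2) < t n) (t0 t1 t2 : ℝ) (a0 : |t0| ≤ 1/2) (a1 : |t1| ≤ 1/2) (a2 : |t2| ≤ 1/2) :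
    t0 • e 0 + t1 • e 1 + t2 • e 2 + t 3 • e 3 + t 4 • e 4 + t 5 • e 5 ∈ eZi e := by
  have hT : ∀ n, eExt t0 t1 t2 t (n+6) = - eExt t0 t1 t2 t n := by
    intro n
    simp only [eExt, ht]
    have : n % 12 = 0 ∨ n % 12 = 1 ∨ n % 12 = 2 ∨ n % 12 = 3 ∨ n % 12 = 4 ∨ n % 12 = 5 ∨
      n % 12 = 6 ∨ n % 12 = 7 ∨ n % 12 = 8 ∨ n % 12 = 9 ∨ n % 12 = 10 ∨ n % 12 = 11 := by omega
    rcases this with q | q | q | q | q | q | q | q | q | q | q | q <;>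
      norm_num [q, Int.add_emod]
  have key := eU_mem h (t := eExt t0 t1 t2 t) hT (by
    intro n
    rw [abs_le] at a0 a1 a2
    simp only [eExt]
    split_ifs <;> linarith [hb n]) (by norm_num [eExt]; linarith [hb 3])
      (by norm_num [eExt]; linarith [hb 9, show t 9 = - t 3 from ht 3])
      (by norm_num [eExt]; linarith [hb 4])
      (by norm_num [eExt]; linarith [hb 10, show t 10 = - t 4 from ht 4])
  convert key using 1
  norm_num [eU, eExt]

lemma ESys.triple0 {e : ℤ → ℝ × ℝ} (h : ESys e) (u : ℝ × ℝ) (hu : u ∈ eZi e) :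
    u + e 1 ∈ eZi e ∨ u + e 6 ∈ eZi e ∨ u + e 8 ∈ eZi e := by
  obtain ⟨t, ht, hb, rfl⟩ := h.rep u hu
  have hb' : ∀ n, t n < 1/2 := fun n => by linarith [hb (n+6), ht n]
  rw [show e 6 = - e 0 from h.he 0, show e 8 = - e 2 from h.he 2]
  obtain ⟨⟨c01, c02, -⟩, ⟨c12, -⟩, -⟩ := h.pos
  set A := crx (e 1) (e 2) / crx (e 0) (e 2) with hA
  set B := crx (e 0) (e 1) / crx (e 0) (e 2) with hB
  have hA0 : 0 < A := div_pos c12 c02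
  have hB0 : 0 < B := div_pos c01 c02
  have rel : e 1 = A • e 0 + B • e 2 := by
    exact crx_decomp _ _ _ c02.ne'
  have key : ∀ s : ℝ, eU e t 0 = (t 0 + A * s) • e 0 + (t 1 - s) • e 1 + (t 2 + B * s) • e 2 +
      t 3 • e 3 + t 4 • e 4 + t 5 • e 5 := by
    intro s
    simp only [eU]
    norm_num
    have : (t 0 + A * s) • e 0 + (t 1 - s) • e 1 + (t 2 + B * s) • e 2 =
      t 0 • e 0 + t 1 • e 1 + t 2 • e 2 + s • (A • e 0 + B • e 2 - e 1) := by module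
    rw [this, ← rel]; simp
  have b0 := hb 0
  have b1 := hb 1
  have b2 := hb 2
  have b0' := hb' 0
  have b1' := hb' 1
  have b2' := hb' 2
  set s1 := t 1 + 1/2 with hs1
  set s0 := (1/2 - t 0) / A with hs0
  set s2 := (1/2 - t 2) / B with hs2
  have e0 : A * s0 = 1/2 - t 0 := by rw [hs0]; field_simp
  have e2 : B * s2 = 1/2 - t 2 := by rw [hs2]; field_simp
  have p0 : 0 < s0 := div_pos (by linarith) hA0
  have p2 : 0 < s2 := div_pos (by linarith) hB0
  have p1 : 0 < s1 := by linarith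
  have m0 : ∀ s, 0 ≤ s → s ≤ s0 → |t 0 + A * s| ≤ 1/2 ∧ |t 0 + A * s| ≤ 1/2 := by
    intro s h1 h2
    rw [abs_le]
    have := mul_le_mul_of_nonneg_left h2 hA0.le
    have := mul_nonneg hA0.le h1
    constructor <;> constructor <;> linarith
  have m2 : ∀ s, 0 ≤ s → s ≤ s2 → |t 2 + B * s| ≤ 1/2 := by
    intro s h1 h2
    rw [abs_le]
    have := mul_le_mul_of_nonneg_left h2 hB0.le
    have := mul_nonneg hB0.le h1
    constructor <;> linarith
  by_cases h1 : s1 ≤ s0 ∧ s1 ≤ s2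
  · left
    rw [key s1]
    have := h.triple_aux ht hb (t 0 + A * s1) (t 1 - s1 + 1) (t 2 + B * s1) (m0 _ p1.le h1.1).1
      (by rw [abs_le]; constructor <;> linarith) (m2 _ p1.le h1.2)
    convert this using 1
    module
  by_cases h2 : s0 ≤ s2
  · right; left
    have h01 : s0 ≤ s1 := by
      by_contra hcon
      exact h1 ⟨by linarith, by linarith⟩
    rw [key s0]
    have := h.triple_aux ht hb (t 0 + A * s0 - 1) (t 1 - s0) (t 2 + B * s0)
      (by rw [abs_le]; constructor <;> linarith)
      (by rw [abs_le]; constructor <;> linarith) (m2 _ p0.le h2)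
    convert this using 1
    module
  · right; right
    have h21 : s2 ≤ s1 := by
      by_contra hcon
      exact h1 ⟨by linarith, by linarith⟩
    rw [key s2]
    have := h.triple_aux ht hb (t 0 + A * s2) (t 1 - s2) (t 2 + B * s2 - 1)
      (m0 _ p2.le (by linarith)).1
      (by rw [abs_le]; constructor <;> linarith) (by rw [abs_le]; constructor <;> linarith)
    convert this using 1
    module

lemma ESys.triple {e : ℤ → ℝ × ℝ} (h : ESys e) (j : ℤ) (u : ℝ × ℝ) (hu : u ∈ eZi e) :
    u + e (j+1) ∈ eZi e ∨ u + e (j+6) ∈ eZi e ∨ u + e (j+8) ∈ eZi e := by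
  have := (h.shift j).triple0 u (by rwa [eZi_shift])
  rw [eZi_shift] at this
  simpa only [add_comm] using this


open Topology Filter

lemma eL_cont (e : ℤ → ℝ × ℝ) (j : ℤ) : Continuous (eL e j) := by
  unfold eL crx; fun_prop

lemma ESys.interior_eq {e : ℤ → ℝ × ℝ} (h : ESys e) : interior (eZ e) = eZi e := by
  apply Set.Subset.antisymm
  · intro u hu j
    by_contra hcon
    have hz := interior_subset hu j
    have h0 : eL e j u = 0 := by linarith
    have hmem : eZ e ∈ 𝓝 u := mem_interior_iff_mem_nhds.mp hu
    have ht : Tendsto (fun t : ℝ => u + t • (- e (j+1))) (𝓝[>] 0) (𝓝 u) := by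
      have : Continuous (fun t : ℝ => u + t • (- e (j+1))) := by fun_prop
      have := this.tendsto 0
      simp only [zero_smul, add_zero] at this
      exact this.mono_left nhdsWithin_le_nhds
    have hev := (ht.eventually hmem).and self_mem_nhdsWithin
    obtain ⟨t, ht1, ht2⟩ := hev.exists
    have ht2 : 0 < t := ht2
    have := ht1 j
    rw [eL_add, h0] at this
    have c := h.hc j (j+1) (by linarith) (by linarith)
    have c' : crx (e j) (- e (j+1)) = - crx (e j) (e (j+1)) := by simp [crx]; ring
    rw [c'] at this
    nlinarith
  · apply interior_maximal
    · exact fun u hu j => (hu j).le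
    · have : eZi e = ⋂ j ∈ Finset.Ico (0:ℤ) 12, {u | 0 < eL e j u} := by
        ext u
        simp only [Set.mem_iInter]
        constructor
        · exact fun hu j _ => hu j
        · intro hu
          refine per12 (fun l => by rw [h.eL12]) 0 ?_
          intro l h1 h2
          exact hu l (by simp; omega)
      rw [this]
      exact isOpen_biInter_finset (fun j _ => isOpen_lt continuous_const (eL_cont e j))

structure ETile (e : ℤ → ℝ × ℝ) {ι : Type} (x : ι → ℝ × ℝ) (k : ℕ) : Prop where
  sys : ESys e
  bd : ∃ R : ℝ, ∀ u ∈ eZ e, ‖u‖ ≤ R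
  fin : ∀ R : ℝ, {i : ι | ‖x i‖ ≤ R}.Finite
  cov : ∀ p : ℝ × ℝ, ∃ s : Finset ι, k ≤ s.card ∧ ∀ i ∈ s, p - x i ∈ eZ e
  pack : ∀ p : ℝ × ℝ, ∀ s : Finset ι, (∀ i ∈ s, p - x i ∈ eZi e) → s.card ≤ k

lemma ETile.fin' {e : ℤ → ℝ × ℝ} {ι : Type} {x : ι → ℝ × ℝ} {k : ℕ} (h : ETile e x k)
    (v : ℝ × ℝ) (R : ℝ) : {i : ι | ‖v - x i‖ ≤ R}.Finite := by
  refine (h.fin (‖v‖ + R)).subset ?_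
  intro i hi
  have hi : ‖v - x i‖ ≤ R := hi
  show ‖x i‖ ≤ ‖v‖ + R
  have : x i = v - (v - x i) := by abel
  rw [this]
  exact (norm_sub_le _ _).trans (by linarith)

lemma ETile.finZ {e : ℤ → ℝ × ℝ} {ι : Type} {x : ι → ℝ × ℝ} {k : ℕ} (h : ETile e x k)
    (v : ℝ × ℝ) : {i : ι | v - x i ∈ eZ e}.Finite := by
  obtain ⟨R, hR⟩ := h.bd
  exact (h.fin' v R).subset (fun i hi => hR _ hi)

lemma ETile.count {e : ℤ → ℝ × ℝ} {ι : Type} {x : ι → ℝ × ℝ} {k : ℕ} (h : ETile e x k)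
    (v d : ℝ × ℝ) (hd : ∀ j, crx (e j) d ≠ 0) : ∃ C : Finset ι, C.card = k ∧
    ∀ i, i ∈ C ↔ ∀ j, 0 < eL e j (v - x i) ∨ (eL e j (v - x i) = 0 ∧ 0 < crx (e j) d) := by
  classical
  obtain ⟨R, hR⟩ := h.bd
  set I := (h.fin' v (R + ‖d‖)).toFinset with hI
  have hmI : ∀ i, i ∈ I ↔ ‖v - x i‖ ≤ R + ‖d‖ := by
    intro i; rw [hI, Set.Finite.mem_toFinset]; rfl
  have ev : ∀ᶠ ε : ℝ in 𝓝[>] 0, ∀ i ∈ I, ∀ j ∈ Finset.Ico (0:ℤ) 12,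
      (0 < eL e j (v - x i) → 0 < eL e j (v - x i) + ε * crx (e j) d) ∧
      (eL e j (v - x i) < 0 → eL e j (v - x i) + ε * crx (e j) d < 0) := by
    rw [Finset.eventually_all]
    intro i _
    rw [Finset.eventually_all]
    intro j _
    have ht : Tendsto (fun ε : ℝ => eL e j (v - x i) + ε * crx (e j) d) (𝓝[>] 0)
        (𝓝 (eL e j (v - x i))) := by
      have : Continuous (fun ε : ℝ => eL e j (v - x i) + ε * crx (e j) d) := by fun_prop
      have := this.tendsto 0
      simp only [zero_mul, add_zero] at this
      exact this.mono_left nhdsWithin_le_nhds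
    apply Eventually.and
    · by_cases h0 : 0 < eL e j (v - x i)
      · filter_upwards [ht.eventually (lt_mem_nhds h0)] with ε hε _ using hε
      · exact Eventually.of_forall fun ε h1 => absurd h1 h0
    · by_cases h0 : eL e j (v - x i) < 0
      · filter_upwards [ht.eventually (gt_mem_nhds h0)] with ε hε _ using hε
      · exact Eventually.of_forall fun ε h1 => absurd h1 h0
  have ev1 : ∀ᶠ ε : ℝ in 𝓝[>] 0, ε < 1 := by
    have : ∀ᶠ ε : ℝ in 𝓝 0, ε < 1 := gt_mem_nhds (by norm_num)
    exact this.filter_mono nhdsWithin_le_nhds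
  obtain ⟨ε, ⟨hε, hε1⟩, hε0⟩ := ((ev.and ev1).and self_mem_nhdsWithin).exists
  have hε0 : 0 < ε := hε0
  have hε' : ∀ i ∈ I, ∀ j,
      (0 < eL e j (v - x i) → 0 < eL e j (v - x i) + ε * crx (e j) d) ∧
      (eL e j (v - x i) < 0 → eL e j (v - x i) + ε * crx (e j) d < 0) := by
    intro i hi
    refine per12 (fun l => by rw [h.sys.eL12, h.sys.he12]) 0 ?_
    intro l h1 h2
    exact hε i hi l (by simp; omega)
  have sub : ∀ i, v + ε • d - x i = (v - x i) + ε • d := fun i => by abel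
  set C := I.filter (fun i => ∀ j, 0 < eL e j (v - x i) ∨ (eL e j (v - x i) = 0 ∧ 0 < crx (e j) d))
    with hC
  refine ⟨C, le_antisymm ?_ ?_, ?_⟩
  · apply h.pack (v + ε • d)
    intro i hi j
    rw [hC, Finset.mem_filter] at hi
    rw [sub, eL_add]
    rcases hi.2 j with h1 | ⟨h1, h2⟩
    · exact (hε' i hi.1 j).1 h1
    · rw [h1]; positivity
  · obtain ⟨s, hs, hs'⟩ := h.cov (v + ε • d)
    refine hs.trans (Finset.card_le_card ?_)
    intro i hi
    have hz := hs' i hi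
    rw [sub] at hz
    have hiI : i ∈ I := by
      rw [hmI]
      have h1 := hR _ hz
      have : v - x i = (v - x i + ε • d) - ε • d := by abel
      rw [this]
      refine (norm_sub_le _ _).trans ?_
      have : ‖ε • d‖ ≤ ‖d‖ := by
        rw [norm_smul, Real.norm_of_nonneg hε0.le]
        nlinarith [norm_nonneg d]
      linarith
    rw [hC, Finset.mem_filter]
    refine ⟨hiI, fun j => ?_⟩
    have hzj := hz j
    rw [eL_add] at hzj
    rcases lt_trichotomy 0 (eL e j (v - x i)) with h1 | h1 | h1
    · exact Or.inl h1
    · right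
      refine ⟨h1.symm, ?_⟩
      rw [← h1, zero_add] at hzj
      exact lt_of_le_of_ne (by by_contra hcon; nlinarith) (hd j).symm
    · have := (hε' i hiI j).2 h1
      linarith
  · intro i
    rw [hC, Finset.mem_filter]
    refine ⟨fun h => h.2, fun hi => ⟨?_, hi⟩⟩
    rw [hmI]
    have : v - x i ∈ eZ e := fun j => by
      rcases hi j with h1 | h1
      · exact h1.le
      · exact h1.1.ge
    have := hR _ this
    linarith [norm_nonneg d]

lemma ESys.crd {e : ℤ → ℝ × ℝ} (h : ESys e) (l r : ℤ) :
    ((r - l) % 12 ≤ 5 → 0 < crx (e l) (e r + e (r+1))) ∧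
    (5 < (r - l) % 12 → crx (e l) (e r + e (r+1)) < 0) := by
  have add : ∀ a b c : ℝ × ℝ, crx a (b + c) = crx a b + crx a c := by
    intro a b c; simp [crx]; ring
  have neg : ∀ a b : ℝ × ℝ, crx a (-b) = - crx a b := by
    intro a b; simp [crx]; ring
  have self : ∀ a : ℝ × ℝ, crx a a = 0 := by intro a; simp [crx]; ring
  have main : ∀ r, l ≤ r → r < l + 6 → 0 < crx (e l) (e r + e (r+1)) := by
    intro r h1 h2
    rw [add]
    rcases eq_or_lt_of_le h1 with rfl | h1
    · rw [self, zero_add]; exact h.hc _ _ (by omega) (by omega)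
    · have p1 := h.hc l r h1 h2
      have p2 : 0 ≤ crx (e l) (e (r+1)) := by
        by_cases h3 : r + 1 = l + 6
        · rw [h3, h.he, neg, self]; simp
        · exact (h.hc _ _ (by omega) (by omega)).le
      linarith
  revert r
  refine per12 (fun r => ?_) l ?_
  · rw [show r + 12 + 1 = r + 1 + 12 by ring, h.he12, h.he12, show (r + 12 - l) % 12 = (r - l) % 12 by omega]
  · intro r h1 h2
    by_cases h3 : r < l + 6
    · exact ⟨fun _ => main r h1 h3, fun h4 => by omega⟩
    · refine ⟨fun h4 => by omega, fun _ => ?_⟩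
      have := main (r - 6) (by omega) (by omega)
      have q1 := h.he (r - 6)
      have q2 := h.he (r - 6 + 1)
      rw [show r - 6 + 6 = r by ring] at q1
      rw [show r - 6 + 1 + 6 = r + 1 by ring] at q2
      rw [q1, q2, ← neg_add, neg]
      linarith

/-- The point just beyond `u` in direction `d` is inside. -/
def eIn (e : ℤ → ℝ × ℝ) (u d : ℝ × ℝ) : Prop :=
  ∀ j, 0 < eL e j u ∨ (eL e j u = 0 ∧ 0 < crx (e j) d)

lemma ESys.in_v {e : ℤ → ℝ × ℝ} (h : ESys e) (j r : ℤ) :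
    eIn e (ept e j) (e r + e (r+1)) ↔ (r - j) % 12 ≤ 4 := by
  obtain ⟨g1, g2, g3⟩ := h.L_pt j
  constructor
  · intro hin
    have a1 := hin j
    have a2 := hin (j + 11)
    rw [g1] at a1; rw [g2] at a2
    have a1 := (a1.resolve_left (lt_irrefl _)).2
    have a2 := (a2.resolve_left (lt_irrefl _)).2
    by_contra hcon
    by_cases h5 : (r - j) % 12 ≤ 5
    · have := (h.crd (j+11) r).2 (by omega)
      linarith
    · have := (h.crd j r).2 (by omega)
      linarith
  · intro hr
    refine per12 (fun l => by rw [h.eL12, h.he12]) j ?_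
    intro l h1 h2
    rcases eq_or_lt_of_le h1 with rfl | h1
    · exact Or.inr ⟨g1, (h.crd _ _).1 (by omega)⟩
    · rcases eq_or_lt_of_le (show l ≤ j + 11 by linarith) with rfl | h3
      · exact Or.inr ⟨g2, (h.crd _ _).1 (by omega)⟩
      · exact Or.inl (g3 l h1 h3)

lemma ESys.in_e {e : ℤ → ℝ × ℝ} (h : ESys e) (j r : ℤ) (t : ℝ) (t0 : 0 < t) (t1 : t < 1) :
    eIn e (ept e j + t • e j) (e r + e (r+1)) ↔ (r - j) % 12 ≤ 5 := by
  obtain ⟨g1, g2, g3⟩ := h.L_pt j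
  obtain ⟨k1, k2, k3⟩ := h.L_pt (j+1)
  have key : ept e j + t • e j = (1 - t) • (ept e j) + t • (ept e (j+1)) := by
    rw [h.ept_succ]; ext <;> simp <;> ring
  have z : eL e j (ept e j + t • e j) = 0 := by
    rw [eL_add, g1]; simp [crx]; right; ring
  constructor
  · intro hin
    have a1 := hin j
    rw [z] at a1
    have a1 := (a1.resolve_left (lt_irrefl _)).2
    by_contra hcon
    have := (h.crd j r).2 (by omega)
    linarith
  · intro hr
    refine per12 (fun l => by rw [h.eL12, h.he12]) j ?_
    intro l h1 h2
    rcases eq_or_lt_of_le h1 with rfl | h1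
    · exact Or.inr ⟨z, (h.crd _ _).1 (by omega)⟩
    · left
      rw [key, eL_comb]
      have q1 := h.pt_mem j l
      have q2 := h.pt_mem (j+1) l
      have : 0 < 1 - t := by linarith
      rcases eq_or_lt_of_le (show l ≤ j + 11 by linarith) with h3 | h3
      · have := k3 l (by omega) (by omega)
        positivity
      · have := g3 l h1 h3
        positivity

abbrev ETp := Option (Fin 12 ⊕ Fin 12)

def eTy (e : ℤ → ℝ × ℝ) (u : ℝ × ℝ) : ETp → Prop
  | none => u ∈ eZi e
  | some (Sum.inl j) => u = ept e j.val
  | some (Sum.inr j) => ∃ t : ℝ, 0 < t ∧ t < 1 ∧ u = ept e j.val + t • e j.val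

def eInd (r : Fin 12) : ETp → Bool
  | none => true
  | some (Sum.inl j) => decide ((r - j).val ≤ 4)
  | some (Sum.inr j) => decide ((r - j).val ≤ 5)

def eInd' (r : Fin 12) : ETp → Bool
  | none => false
  | some (Sum.inl j) => decide (1 ≤ (r - j).val ∧ (r - j).val ≤ 4)
  | some (Sum.inr j) => decide (1 ≤ (r - j).val ∧ (r - j).val ≤ 5)

lemma fin_sub_val (r j : Fin 12) : ((r.val : ℤ) - j.val) % 12 = ((r - j).val : ℤ) := by
  revert r j; decide

lemma fin_add_val : ∀ r : Fin 12, ((r.val : ℤ) + 1) % 12 = ((r + 1 : Fin 12).val : ℤ) % 12 := by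
  decide

lemma fin_add_val1 : ∀ r : Fin 12, ((r.val : ℤ) + 1) % 12 = ((r + 1 : Fin 12).val : ℤ) % 12 := by
  decide

lemma fin_add_val6 : ∀ r : Fin 12, ((r.val : ℤ) + 6) % 12 = ((r + 6 : Fin 12).val : ℤ) % 12 := by
  decide

lemma fin_add_val8 : ∀ r : Fin 12, ((r.val : ℤ) + 8) % 12 = ((r + 8 : Fin 12).val : ℤ) % 12 := by
  decide

lemma ESys.ind {e : ℤ → ℝ × ℝ} (h : ESys e) (u : ℝ × ℝ) (t : ETp) (ht : eTy e u t) (r : Fin 12) :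
    eIn e u (e r.val + e (r.val+1)) ↔ eInd r t = true := by
  match t, ht with
  | none, ht => exact ⟨fun _ => rfl, fun _ j => Or.inl (ht j)⟩
  | some (Sum.inl j), ht =>
    rw [show u = _ from ht, h.in_v, fin_sub_val]; simp [eInd]
  | some (Sum.inr j), ht =>
    obtain ⟨t, t0, t1, hu⟩ := ht
    rw [hu, h.in_e _ _ t t0 t1, fin_sub_val]; simp [eInd]

set_option maxRecDepth 100000 in
lemma eInd_inj : ∀ t t' : ETp, (∀ r, eInd r t = eInd r t') → t = t' := by
  decide

lemma ESys.ty_unique {e : ℤ → ℝ × ℝ} (h : ESys e) {u : ℝ × ℝ} {t t' : ETp} (ht : eTy e u t)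
    (ht' : eTy e u t') : t = t' := by
  apply eInd_inj
  intro r
  rw [Bool.eq_iff_iff, ← h.ind u t ht, ← h.ind u t' ht']

lemma ESys.ty_exists {e : ℤ → ℝ × ℝ} (h : ESys e) {u : ℝ × ℝ} (hu : u ∈ eZ e) :
    ∃ t, eTy e u t := by
  rcases h.classify u hu with h1 | ⟨j, hj⟩
  · exact ⟨none, h1⟩
  · revert j
    refine per12 (fun j => by rw [h.ept12, h.he12]) 0 ?_
    intro j h1 h2 hj
    lift j to ℕ using h1
    have hj12 : j < 12 := by omega
    rcases hj with hj | hj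
    · exact ⟨some (Sum.inl ⟨j, hj12⟩), hj⟩
    · exact ⟨some (Sum.inr ⟨j, hj12⟩), hj⟩

lemma eInd_ex : ∀ t : ETp, ∃ r, eInd r t = true := by
  decide

lemma ESys.ty_mem {e : ℤ → ℝ × ℝ} (h : ESys e) {u : ℝ × ℝ} {t : ETp} (ht : eTy e u t) :
    u ∈ eZ e := by
  obtain ⟨r, hr⟩ := eInd_ex t
  rw [← h.ind u t ht] at hr
  intro j
  rcases hr j with h1 | h1
  · exact h1.le
  · exact h1.1.ge

noncomputable def eCnt (e : ℤ → ℝ × ℝ) {ι : Type} (x : ι → ℝ × ℝ) (v : ℝ × ℝ) (t : ETp) : ℕ :=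
  Set.ncard {i : ι | eTy e (v - x i) t}

noncomputable def ePsi (e : ℤ → ℝ × ℝ) {ι : Type} (x : ι → ℝ × ℝ) (v : ℝ × ℝ) (r : Fin 12) : ℕ :=
  Set.ncard {i : ι | v - x i ∈ eZi e ∧ v - x i + e r.val ∈ eZi e}

lemma ETile.tyfun {e : ℤ → ℝ × ℝ} {ι : Type} {x : ι → ℝ × ℝ} {k : ℕ} (h : ETile e x k)
    (v : ℝ × ℝ) : ∃ ty : ι → ETp, ∀ i t, eTy e (v - x i) t → ty i = t := by
  classical
  refine ⟨fun i => if hi : ∃ t, eTy e (v - x i) t then hi.choose else none, ?_⟩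
  intro i t ht
  have hi : ∃ t, eTy e (v - x i) t := ⟨t, ht⟩
  simp only [dif_pos hi]
  exact h.sys.ty_unique hi.choose_spec ht

lemma ETile.sum_eq {e : ℤ → ℝ × ℝ} {ι : Type} {x : ι → ℝ × ℝ} {k : ℕ} (h : ETile e x k)
    (v : ℝ × ℝ) (r : Fin 12) : k = ∑ t : ETp, if eInd r t = true then eCnt e x v t else 0 := by
  classical
  obtain ⟨ty, hty⟩ := h.tyfun v
  obtain ⟨C, hC, hC'⟩ := h.count v (e r.val + e (r.val + 1)) (by
    intro j
    rcases le_or_gt (((r.val : ℤ) - j) % 12) 5 with h1 | h1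
    · exact ((h.sys.crd j r.val).1 h1).ne'
    · exact ((h.sys.crd j r.val).2 h1).ne)
  rw [← hC, Finset.card_eq_sum_card_fiberwise (f := ty) (t := Finset.univ) (fun _ _ => by simp)]
  refine Finset.sum_congr rfl (fun t _ => ?_)
  have hmem : ∀ i ∈ C, ty i = t → eTy e (v - x i) t ∧ eInd r t = true := by
    intro i hi hit
    have hin : eIn e (v - x i) _ := (hC' i).1 hi
    have hz : v - x i ∈ eZ e := fun j => by
      rcases hin j with h1 | h1
      · exact h1.le
      · exact h1.1.ge
    obtain ⟨t', ht'⟩ := h.sys.ty_exists hz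
    have := hty i t' ht'
    rw [hit] at this
    subst this
    exact ⟨ht', (h.sys.ind _ _ ht' r).1 hin⟩
  split_ifs with hind
  · rw [eCnt, ← Set.ncard_coe_finset]
    congr 1
    ext i
    simp only [Finset.coe_filter]
    constructor
    · rintro ⟨h1, h2⟩
      exact (hmem i h1 h2).1
    · intro ht
      exact ⟨(hC' i).2 ((h.sys.ind _ _ ht r).2 hind), hty i t ht⟩
  · rw [Finset.card_eq_zero, Finset.filter_eq_empty_iff]
    intro i hi hit
    exact hind (hmem i hi hit).2

lemma ESys.e_mod {e : ℤ → ℝ × ℝ} (h : ESys e) {m n : ℤ} (hmn : m % 12 = n % 12) : e m = e n := by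
  have : ∀ l, (l % 12 = n % 12 → e l = e n) := by
    refine per12 (fun l => by rw [h.he12, show (l + 12) % 12 = l % 12 by omega]) n ?_
    intro l h1 h2 h3
    congr 1; omega
  exact this m hmn

lemma ESys.ept_mod {e : ℤ → ℝ × ℝ} (h : ESys e) {m n : ℤ} (hmn : m % 12 = n % 12) :
    ept e m = ept e n := by
  have : ∀ l, (l % 12 = n % 12 → ept e l = ept e n) := by
    refine per12 (fun l => by rw [h.ept12, show (l + 12) % 12 = l % 12 by omega]) n ?_
    intro l h1 h2 h3
    congr 1; omega
  exact this m hmn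

lemma ETile.ty_fin {e : ℤ → ℝ × ℝ} {ι : Type} {x : ι → ℝ × ℝ} {k : ℕ} (h : ETile e x k)
    (v : ℝ × ℝ) (t : ETp) : {i : ι | eTy e (v - x i) t}.Finite :=
  (h.finZ v).subset (fun _ hi => h.sys.ty_mem hi)

lemma ETile.next {e : ℤ → ℝ × ℝ} {ι : Type} {x : ι → ℝ × ℝ} {k : ℕ} (h : ETile e x k)
    (v : ℝ × ℝ) (r : Fin 12) (hr : 1 ≤ eCnt e x v (some (Sum.inl r))) :
    1 ≤ eCnt e x (v + e r.val) (some (Sum.inl (r+1))) := by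
  rw [eCnt, Nat.one_le_iff_ne_zero, ← Nat.pos_iff_ne_zero, Set.ncard_pos (h.ty_fin _ _)] at hr ⊢
  obtain ⟨i, hi⟩ := hr
  refine ⟨i, ?_⟩
  have hi : v - x i = ept e r.val := hi
  show v + e r.val - x i = ept e ((r+1 : Fin 12).val)
  rw [add_sub_right_comm, hi, ← h.sys.ept_succ]
  apply h.sys.ept_mod
  exact fin_add_val r

lemma ESys.chord {e : ℤ → ℝ × ℝ} (h : ESys e) (u : ℝ × ℝ) (t : ETp) (ht : eTy e u t) (r : Fin 12)
    (hr : eInd' r t = true) : u + e r.val ∈ eZi e := by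
  match t, ht with
  | none, ht => simp [eInd'] at hr
  | some (Sum.inl j), ht =>
    simp only [eInd', decide_eq_true_eq] at hr
    have hm := fin_sub_val r j
    rw [show u = _ from ht, h.e_mod (m := r.val) (n := j.val + (r - j).val) (by omega)]
    exact h.chord_v _ _ (by omega) (by omega)
  | some (Sum.inr j), ht =>
    simp only [eInd', decide_eq_true_eq] at hr
    obtain ⟨t, t0, t1, hu⟩ := ht
    have hm := fin_sub_val r j
    rw [hu, h.e_mod (m := r.val) (n := j.val + (r - j).val) (by omega)]
    exact h.chord_e _ _ (by omega) (by omega) t t0 t1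

lemma ETile.sum_le {e : ℤ → ℝ × ℝ} {ι : Type} {x : ι → ℝ × ℝ} {k : ℕ} (h : ETile e x k)
    (v : ℝ × ℝ) (r : Fin 12) :
    (∑ t : ETp, if t = none then ePsi e x v r else if eInd' r t = true then eCnt e x v t else 0)
      ≤ eCnt e x (v + e r.val) none := by
  classical
  obtain ⟨ty, hty⟩ := h.tyfun v
  set D := (h.ty_fin (v + e r.val) none).toFinset with hD
  have hcard : eCnt e x (v + e r.val) none = D.card := by
    rw [eCnt, hD, Set.ncard_eq_toFinset_card _ (h.ty_fin _ _)]
  have hmD : ∀ i, v - x i + e r.val ∈ eZi e → i ∈ D := by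
    intro i hi
    rw [hD, Set.Finite.mem_toFinset]
    show v + e r.val - x i ∈ eZi e
    rwa [add_sub_right_comm]
  rw [hcard, Finset.card_eq_sum_card_fiberwise (f := ty) (t := Finset.univ) (fun _ _ => by simp)]
  refine Finset.sum_le_sum (fun t _ => ?_)
  rw [← Set.ncard_coe_finset]
  split_ifs with h1 h2
  · subst h1
    refine Set.ncard_le_ncard ?_ (Finset.finite_toSet _)
    rintro i ⟨hi1, hi2⟩
    simp only [Finset.coe_filter]
    exact ⟨hmD i hi2, hty i none hi1⟩
  · refine Set.ncard_le_ncard ?_ (Finset.finite_toSet _)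
    intro i hi
    simp only [Finset.coe_filter]
    exact ⟨hmD i (h.sys.chord _ t hi r h2), hty i t hi⟩
  · exact Nat.zero_le _

lemma ETile.psi {e : ℤ → ℝ × ℝ} {ι : Type} {x : ι → ℝ × ℝ} {k : ℕ} (h : ETile e x k)
    (v : ℝ × ℝ) (hv : 1 ≤ eCnt e x v none) (c : Fin 12) :
    1 ≤ ePsi e x v (c+1) + ePsi e x v (c+6) + ePsi e x v (c+8) := by
  rw [eCnt, Nat.one_le_iff_ne_zero, ← Nat.pos_iff_ne_zero, Set.ncard_pos (h.ty_fin _ _)] at hv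
  obtain ⟨i, hi⟩ := hv
  have hi : v - x i ∈ eZi e := hi
  have one : ∀ r : Fin 12, v - x i + e r.val ∈ eZi e → 1 ≤ ePsi e x v r := by
    intro r hr
    rw [ePsi, Nat.one_le_iff_ne_zero, ← Nat.pos_iff_ne_zero, Set.ncard_pos ((h.ty_fin v none).subset (fun _ hi => hi.1))]
    exact ⟨i, hi, hr⟩
  have m1 : e ((c.val : ℤ) + 1) = e ((c + 1 : Fin 12).val) := h.sys.e_mod (fin_add_val1 c)
  have m2 : e ((c.val : ℤ) + 6) = e ((c + 6 : Fin 12).val) := h.sys.e_mod (fin_add_val6 c)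
  have m3 : e ((c.val : ℤ) + 8) = e ((c + 8 : Fin 12).val) := h.sys.e_mod (fin_add_val8 c)
  rcases h.sys.triple c.val _ hi with h1 | h1 | h1
  · rw [m1] at h1; have := one _ h1; omega
  · rw [m2] at h1; have := one _ h1; omega
  · rw [m3] at h1; have := one _ h1; omega

lemma sum5 (a : Fin 12 → ℕ) (r : Fin 12) :
    (∑ j : Fin 12, if (r - j).val ≤ 4 then a j else 0) =
      a r + a (r-1) + a (r-2) + a (r-3) + a (r-4) := by
  rw [← Equiv.sum_comp (Equiv.subLeft r)]
  simp [Fin.sum_univ_succ, Equiv.subLeft_apply]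
  ring

lemma sum6 (a : Fin 12 → ℕ) (r : Fin 12) :
    (∑ j : Fin 12, if (r - j).val ≤ 5 then a j else 0) =
      a r + a (r-1) + a (r-2) + a (r-3) + a (r-4) + a (r-5) := by
  rw [← Equiv.sum_comp (Equiv.subLeft r)]
  simp [Fin.sum_univ_succ, Equiv.subLeft_apply]
  ring

lemma sum4' (a : Fin 12 → ℕ) (r : Fin 12) :
    (∑ j : Fin 12, if 1 ≤ (r - j).val ∧ (r - j).val ≤ 4 then a j else 0) =
      a (r-1) + a (r-2) + a (r-3) + a (r-4) := by
  rw [← Equiv.sum_comp (Equiv.subLeft r)]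
  simp [Fin.sum_univ_succ, Equiv.subLeft_apply]
  ring

lemma sum5' (a : Fin 12 → ℕ) (r : Fin 12) :
    (∑ j : Fin 12, if 1 ≤ (r - j).val ∧ (r - j).val ≤ 5 then a j else 0) =
      a (r-1) + a (r-2) + a (r-3) + a (r-4) + a (r-5) := by
  rw [← Equiv.sum_comp (Equiv.subLeft r)]
  simp [Fin.sum_univ_succ, Equiv.subLeft_apply]
  ring

lemma arithL (a0 a1 a2 a3 a4 a5 a6 a7 a8 a9 a10 a11 b0 b1 b2 b3 b4 b5 b6 b7 b8 b9 b10 b11 φ k : ℕ)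
    (e0 : k = φ + (a0 + a11 + a10 + a9 + a8) + (b0 + b11 + b10 + b9 + b8 + b7))
    (e1 : k = φ + (a1 + a0 + a11 + a10 + a9) + (b1 + b0 + b11 + b10 + b9 + b8))
    (e2 : k = φ + (a2 + a1 + a0 + a11 + a10) + (b2 + b1 + b0 + b11 + b10 + b9))
    (e3 : k = φ + (a3 + a2 + a1 + a0 + a11) + (b3 + b2 + b1 + b0 + b11 + b10))
    (e4 : k = φ + (a4 + a3 + a2 + a1 + a0) + (b4 + b3 + b2 + b1 + b0 + b11))
    (e5 : k = φ + (a5 + a4 + a3 + a2 + a1) + (b5 + b4 + b3 + b2 + b1 + b0))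
    (e6 : k = φ + (a6 + a5 + a4 + a3 + a2) + (b6 + b5 + b4 + b3 + b2 + b1))
    (e7 : k = φ + (a7 + a6 + a5 + a4 + a3) + (b7 + b6 + b5 + b4 + b3 + b2))
    (e8 : k = φ + (a8 + a7 + a6 + a5 + a4) + (b8 + b7 + b6 + b5 + b4 + b3))
    (e9 : k = φ + (a9 + a8 + a7 + a6 + a5) + (b9 + b8 + b7 + b6 + b5 + b4))
    (e10 : k = φ + (a10 + a9 + a8 + a7 + a6) + (b10 + b9 + b8 + b7 + b6 + b5))
    (e11 : k = φ + (a11 + a10 + a9 + a8 + a7) + (b11 + b10 + b9 + b8 + b7 + b6))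
    : 2 * k = 2 * φ + 5 * (a0 + a6) + (b0 + b1 + b2 + b3 + b4 + b5 + b6 + b7 + b8 + b9 + b10 + b11) ∧
    a1 + a7 = a0 + a6 ∧
    a2 + a8 = a0 + a6 ∧
    a3 + a9 = a0 + a6 ∧
    a4 + a10 = a0 + a6 ∧
    a5 + a11 = a0 + a6 ∧
    b6 + (a0 + a6) = b0 + a0 + a1 ∧
    b7 + (a0 + a6) = b1 + a1 + a2 ∧
    b8 + (a0 + a6) = b2 + a2 + a3 ∧
    b9 + (a0 + a6) = b3 + a3 + a4 ∧
    b10 + (a0 + a6) = b4 + a4 + a5 ∧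
    b11 + (a0 + a6) = b5 + a5 + a6 ∧
    b0 + (a0 + a6) = b6 + a6 + a7 ∧
    b1 + (a0 + a6) = b7 + a7 + a8 ∧
    b2 + (a0 + a6) = b8 + a8 + a9 ∧
    b3 + (a0 + a6) = b9 + a9 + a10 ∧
    b4 + (a0 + a6) = b10 + a10 + a11 ∧
    b5 + (a0 + a6) = b11 + a11 + a0 := by
  have d0 : a0 + b0 = a7 + b6 := by linarith only [e0, e11]
  have d1 : a1 + b1 = a8 + b7 := by linarith only [e1, e0]
  have d2 : a2 + b2 = a9 + b8 := by linarith only [e2, e1]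
  have d3 : a3 + b3 = a10 + b9 := by linarith only [e3, e2]
  have d4 : a4 + b4 = a11 + b10 := by linarith only [e4, e3]
  have d5 : a5 + b5 = a0 + b11 := by linarith only [e5, e4]
  have d6 : a6 + b6 = a1 + b0 := by linarith only [e6, e5]
  have d7 : a7 + b7 = a2 + b1 := by linarith only [e7, e6]
  have d8 : a8 + b8 = a3 + b2 := by linarith only [e8, e7]
  have d9 : a9 + b9 = a4 + b3 := by linarith only [e9, e8]
  have d10 : a10 + b10 = a5 + b4 := by linarith only [e10, e9]
  have d11 : a11 + b11 = a6 + b5 := by linarith only [e11, e10]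
  have k0 : a0 + a6 = a0 + a6 := rfl
  have k1 : a1 + a7 = a0 + a6 := by linarith only [k0, d0, d6]
  have k2 : a2 + a8 = a0 + a6 := by linarith only [k1, d1, d7]
  have k3 : a3 + a9 = a0 + a6 := by linarith only [k2, d2, d8]
  have k4 : a4 + a10 = a0 + a6 := by linarith only [k3, d3, d9]
  have k5 : a5 + a11 = a0 + a6 := by linarith only [k4, d4, d10]
  refine ⟨by linarith only [e0, e6, k0, k1, k2, k3, k4, k5], k1, k2, k3, k4, k5, by linarith only [d6, k0], by linarith only [d7, k1], by linarith only [d8, k2], by linarith only [d9, k3], by linarith only [d10, k4], by linarith only [d11, k5], by linarith only [d0, k0], by linarith only [d1, k1], by linarith only [d2, k2], by linarith only [d3, k3], by linarith only [d4, k4], by linarith only [d5, k5]⟩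

lemma arithF (a b : Fin 12 → ℕ) (φ k : ℕ)
    (heq : ∀ r, k = φ + (a r + a (r-1) + a (r-2) + a (r-3) + a (r-4)) +
      (b r + b (r-1) + b (r-2) + b (r-3) + b (r-4) + b (r-5))) :
    ∃ κ, (∀ i, a i + a (i+6) = κ) ∧ (∀ i, b (i+6) + κ = b i + a i + a (i+1)) ∧
    2 * k = 2 * φ + 5 * κ + ∑ i, b i := by
  obtain ⟨h0, k1, k2, k3, k4, k5, b0, b1, b2, b3, b4, b5, b6, b7, b8, b9, b10, b11⟩ :=
    arithL (a 0) (a 1) (a 2) (a 3) (a 4) (a 5) (a 6) (a 7) (a 8) (a 9) (a 10) (a 11)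
      (b 0) (b 1) (b 2) (b 3) (b 4) (b 5) (b 6) (b 7) (b 8) (b 9) (b 10) (b 11) φ k
      (heq 0) (heq 1) (heq 2) (heq 3) (heq 4) (heq 5) (heq 6) (heq 7) (heq 8) (heq 9) (heq 10)
      (heq 11)
  refine ⟨a 0 + a 6, ?_, ?_, ?_⟩
  · intro i
    fin_cases i
    · rfl
    · exact k1
    · exact k2
    · exact k3
    · exact k4
    · exact k5
    · exact add_comm _ _
    · exact (add_comm _ _).trans k1
    · exact (add_comm _ _).trans k2
    · exact (add_comm _ _).trans k3
    · exact (add_comm _ _).trans k4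
    · exact (add_comm _ _).trans k5
  · intro i
    fin_cases i
    exacts [b0, b1, b2, b3, b4, b5, b6, b7, b8, b9, b10, b11]
  · rw [h0]
    congr 1
    simp [Fin.sum_univ_succ]
    ring

lemma arith1 (a b : Fin 12 → ℕ) (φ k : ℕ)
    (heq : ∀ r, k = φ + (a r + a (r-1) + a (r-2) + a (r-3) + a (r-4)) +
      (b r + b (r-1) + b (r-2) + b (r-3) + b (r-4) + b (r-5))) (j : Fin 12) (hj : 1 ≤ a j) :
    φ + 3 ≤ k := by
  obtain ⟨κ, h1, h2, h3⟩ := arithF a b φ k heq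
  have := h1 j
  omega

lemma fin12_idx (c : Fin 12) : c + 1 + 1 = c + 2 ∧ c + 2 + 1 = c + 3 ∧ c + 1 + 6 = c + 7 ∧
    c + 2 + 6 = c + 8 ∧ c + 3 + 6 = c + 9 ∧ c + 1 + 8 = c + 9 ∧ c ≠ c + 1 ∧ c ≠ c + 2 ∧ c ≠ c + 6 ∧
    c ≠ c + 7 ∧ c ≠ c + 8 ∧ c ≠ c + 9 := by
  revert c; decide

lemma arith2 (a b ψ : Fin 12 → ℕ) (φ k : ℕ) (hk : k ≤ 5)
    (heq : ∀ r, k = φ + (a r + a (r-1) + a (r-2) + a (r-3) + a (r-4)) +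
      (b r + b (r-1) + b (r-2) + b (r-3) + b (r-4) + b (r-5))) (j : Fin 12) (hj : 1 ≤ a j)
    (hle : ∀ r, 1 ≤ a r → ψ r + (a (r-1) + a (r-2) + a (r-3) + a (r-4)) +
      (b (r-1) + b (r-2) + b (r-3) + b (r-4) + b (r-5)) + 3 ≤ k)
    (htr : 1 ≤ φ → ∀ c, 1 ≤ ψ (c+1) + ψ (c+6) + ψ (c+8)) : False := by
  obtain ⟨κ, h1, h2, h3⟩ := arithF a b φ k heq
  have hle' : ∀ r, 1 ≤ a r → 3 + ψ r ≤ φ + a r + b r := by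
    intro r hr
    have := heq r
    have := hle r hr
    omega
  have hab : ∀ r, a r ≤ κ := fun r => by have := h1 r; omega
  have hbB : ∀ r, b r ≤ ∑ i, b i := fun r => Finset.single_le_sum (f := b) (fun _ _ => Nat.zero_le _) (Finset.mem_univ r)
  have hκ : 1 ≤ κ := by have := hab j; omega
  have hbB2 : ∀ r s, r ≠ s → b r + b s ≤ ∑ i, b i := by
    intro r s hrs
    rw [← Finset.sum_pair hrs]
    exact Finset.sum_le_sum_of_subset (Finset.subset_univ _)
  -- every index `i` of the first half gives `b i + b (i+6)` large unless `φ ≥ 2`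
  have pair : ∀ i, 3 ≤ φ + κ + b i + b (i+6) := by
    intro i
    have q := h1 i
    rcases Nat.lt_or_ge 0 (a i) with h | h
    · have := hle' i h; have := hab i; omega
    · have := hle' (i+6) (by omega); have := hab (i+6); omega
  have hB : ∑ i, b i = (b 0 + b 6) + (b 1 + b 7) + (b 2 + b 8) + (b 3 + b 9) + (b 4 + b 10)
      + (b 5 + b 11) := by
    simp [Fin.sum_univ_succ]; ring
  have p0 : 3 ≤ φ + κ + b 0 + b 6 := pair 0
  have p1 : 3 ≤ φ + κ + b 1 + b 7 := pair 1
  have p2 : 3 ≤ φ + κ + b 2 + b 8 := pair 2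
  have p3 : 3 ≤ φ + κ + b 3 + b 9 := pair 3
  have p4 : 3 ≤ φ + κ + b 4 + b 10 := pair 4
  have p5 : 3 ≤ φ + κ + b 5 + b 11 := pair 5
  have key : κ = 1 ∧ φ = 2 ∧ ∑ i, b i = 1 := by omega
  obtain ⟨rfl, rfl, hB1⟩ := key
  clear p0 p1 p2 p3 p4 p5 hB pair
  obtain ⟨c, hc⟩ : ∃ c, b c ≠ 0 := by
    by_contra hcon
    push Not at hcon
    simp [hcon] at hB1
  have hz : ∀ s, c ≠ s → b s = 0 := fun s hs => by have := hbB2 c s hs; omega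
  have hc1 : b c = 1 := by have := hbB c; omega
  obtain ⟨i1, i2, i3, i4, i5, i6, n1, n2, n6, n7, n8, n9⟩ := fin12_idx c
  have z1 := hz _ n1
  have z2 := hz _ n2
  have z6 := hz _ n6
  have z7 := hz _ n7
  have z8 := hz _ n8
  have z9 := hz _ n9
  have A0 := h2 c
  have A1 := h2 (c+1)
  have A2 := h2 (c+2)
  have B1 := h1 (c+1)
  have B3 := h1 (c+3)
  have T := htr (by norm_num) (c+1)
  rw [i1, i3] at A1
  rw [i2, i4] at A2
  rw [i3] at B1
  rw [i5] at B3
  rw [i1, i3, i6] at T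
  have D2 := hle' (c+2) (by omega)
  have D7 := hle' (c+7) (by omega)
  have D9 := hle' (c+9) (by omega)
  omega


lemma ETile.heq {e : ℤ → ℝ × ℝ} {ι : Type} {x : ι → ℝ × ℝ} {k : ℕ} (h : ETile e x k)
    (v : ℝ × ℝ) (a b : Fin 12 → ℕ) (ha : ∀ r, a r = eCnt e x v (some (Sum.inl r)))
    (hb : ∀ r, b r = eCnt e x v (some (Sum.inr r))) (r : Fin 12) :
    k = eCnt e x v none + (a r + a (r-1) + a (r-2) + a (r-3) + a (r-4)) +
      (b r + b (r-1) + b (r-2) + b (r-3) + b (r-4) + b (r-5)) := by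
  have := h.sum_eq v r
  rw [Fintype.sum_option, Fintype.sum_sum_type] at this
  simp only [← ha, ← hb, eInd, decide_eq_true_eq, if_true] at this
  rw [sum5, sum6] at this
  omega

theorem ETile.final {e : ℤ → ℝ × ℝ} {ι : Type} {x : ι → ℝ × ℝ} {k : ℕ} (h : ETile e x k)
    (hk : 0 < k) : 6 ≤ k := by
  by_contra hcon
  obtain ⟨s, hs, hs'⟩ := h.cov 0
  obtain ⟨i0, -⟩ := Finset.card_pos.mp (lt_of_lt_of_le hk hs)
  set v := x i0 + ept e 0 with hv
  have hj : 1 ≤ eCnt e x v (some (Sum.inl 0)) := by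
    rw [eCnt, Nat.one_le_iff_ne_zero, ← Nat.pos_iff_ne_zero, Set.ncard_pos (h.ty_fin _ _)]
    refine ⟨i0, ?_⟩
    show v - x i0 = ept e _
    rw [hv]; simp
  refine arith2 (fun r => eCnt e x v (some (Sum.inl r))) (fun r => eCnt e x v (some (Sum.inr r)))
    (fun r => ePsi e x v r) (eCnt e x v none) k (by omega)
    (h.heq v _ _ (fun _ => rfl) (fun _ => rfl)) 0 hj ?_ (fun hφ c => h.psi v hφ c)
  intro r hr
  have n := h.next v r hr
  have := arith1 _ _ _ k (h.heq (v + e r.val) (fun r' => eCnt e x (v + e r.val) (some (Sum.inl r')))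
    (fun r' => eCnt e x (v + e r.val) (some (Sum.inr r'))) (fun _ => rfl) (fun _ => rfl)) (r+1) n
  have q := h.sum_le v r
  rw [Fintype.sum_option, Fintype.sum_sum_type] at q
  simp only [eInd', decide_eq_true_eq, if_true, reduceCtorEq, if_false] at q
  rw [sum4' (fun r => eCnt e x v (some (Sum.inl r))),
    sum5' (fun r => eCnt e x v (some (Sum.inr r)))] at q
  omega


lemma crx_self (a : ℝ × ℝ) : crx a a = 0 := by simp [crx]; ring
lemma crx_swap (a b : ℝ × ℝ) : crx a b = - crx b a := by simp [crx]; ring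
lemma crx_neg_r (a b : ℝ × ℝ) : crx a (-b) = - crx a b := by simp [crx]; ring
lemma crx_neg_l (a b : ℝ × ℝ) : crx (-a) b = - crx a b := by simp [crx]; ring
lemma crx_sub_l (a b c : ℝ × ℝ) : crx (a - b) c = crx a c - crx b c := by simp [crx]; ring
lemma crx_sub_r (a b c : ℝ × ℝ) : crx a (b - c) = crx a b - crx a c := by simp [crx]; ring
/-- Plücker relation -/
lemma crx_pl (v a b c : ℝ × ℝ) :
    crx a c * crx v b = crx b c * crx v a + crx a b * crx v c := by simp [crx]; ring

structure QSys (q : ℤ → ℝ × ℝ) : Prop where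
  hq : ∀ i, q (i + 6) = - q i
  hc : ∀ i j, i < j → j < i + 6 → 0 < crx (q i) (q j)
  hx : ∀ i j l, i < j → j < l → l < i + 6 →
    crx (q i) (q l) < crx (q i) (q j) + crx (q j) (q l)

lemma QSys.esys {q : ℤ → ℝ × ℝ} (h : QSys q) : ESys (fun i => q (i+1) - q i) := by
  refine ⟨fun i => ?_, fun i l hil hli => ?_⟩
  · rw [show i + 6 + 1 = i + 1 + 6 by ring, h.hq, h.hq]; abel
  rw [crx_sub_r, sub_pos]
  set v := q (i+1) - q i with hv
  have w0 := h.hc i (i+1) (by omega) (by omega)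
  set w := crx (q i) (q (i+1)) with hw
  have f1 : crx v (q (i+1)) = - w := by
    rw [hv, crx_sub_l, crx_self, hw]; ring
  have f6 : crx v (q (i+6)) = w := by
    rw [hv, h.hq, crx_neg_r, crx_sub_l, crx_self, crx_swap (q (i+1))]; linarith
  have lo : ∀ l, i + 1 < l → l < i + 6 → - w < crx v (q l) := by
    intro l h1 h2
    have := h.hx i (i+1) l (by omega) h1 h2
    rw [hv, crx_sub_l]; linarith
  have hi : ∀ l, i + 1 < l → l < i + 6 → crx v (q l) < w := by
    intro l h1 h2
    have := h.hx (l-6) i (i+1) (by omega) (by omega) (by omega)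
    have e : q l = - q (l - 6) := by rw [← h.hq]; congr 1; ring
    rw [hv, e, crx_neg_r, crx_sub_l, crx_swap (q (i+1)), crx_swap (q i) (q (l-6))]; linarith
  by_cases c1 : l = i + 1
  · rw [c1, f1]; exact lo _ (by omega) (by omega)
  by_cases c5 : l = i + 5
  · rw [c5, show i + 5 + 1 = i + 6 by ring, f6]; exact hi _ (by omega) (by omega)
  have a1 := lo (l+1) (by omega) (by omega)
  have b1 := hi l (by omega) (by omega)
  by_cases d1 : crx v (q (l+1)) ≤ 0
  · have p := crx_pl v (q (i+1)) (q l) (q (l+1))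
    have t := h.hx (i+1) l (l+1) (by omega) (by omega) (by omega)
    have A := h.hc l (l+1) (by omega) (by omega)
    have B := h.hc (i+1) l (by omega) (by omega)
    have C := h.hc (i+1) (l+1) (by omega) (by omega)
    rw [f1] at p
    generalize crx (q l) (q (l+1)) = A' at *
    generalize crx (q (i+1)) (q l) = B' at *
    generalize crx (q (i+1)) (q (l+1)) = C' at *
    generalize crx v (q (l+1)) = f at *
    generalize crx v (q l) = g at *
    by_contra hcon
    have : C' * f ≤ C' * g := by nlinarith
    rcases le_or_gt 0 (C' - B') with h3 | h3
    · nlinarith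
    · nlinarith
  · push Not at d1
    by_cases d2 : crx v (q l) ≤ 0
    · linarith
    push Not at d2
    have p := crx_pl v (q l) (q (l+1)) (q (i+6))
    have t := h.hx l (l+1) (i+6) (by omega) (by omega) (by omega)
    have A := h.hc (l+1) (i+6) (by omega) (by omega)
    have B := h.hc l (l+1) (by omega) (by omega)
    have C := h.hc l (i+6) (by omega) (by omega)
    rw [f6] at p
    generalize crx (q (l+1)) (q (i+6)) = A' at *
    generalize crx (q l) (q (l+1)) = B' at *
    generalize crx (q l) (q (i+6)) = C' at *
    generalize crx v (q (l+1)) = f at *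
    generalize crx v (q l) = g at *
    by_contra hcon
    have : C' * f ≤ C' * g := by nlinarith
    rcases le_or_gt 0 (C' - A') with h3 | h3
    · nlinarith
    · nlinarith

lemma QSys.ept {q : ℤ → ℝ × ℝ} (h : QSys q) (j : ℤ) : ept (fun i => q (i+1) - q i) j = q j := by
  have h6 := h.hq j
  simp only [_root_.ept]
  rw [show j + 1 + 1 = j + 2 by ring, show j + 2 + 1 = j + 3 by ring, show j + 3 + 1 = j + 4 by ring,
    show j + 4 + 1 = j + 5 by ring, show j + 5 + 1 = j + 6 by ring, h6]
  ext <;> simp <;> ring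

lemma eZ_convex (e : ℤ → ℝ × ℝ) : Convex ℝ (eZ e) := by
  intro u hu w hw a b ha hb hab j
  have : a = 1 - b := by linarith
  subst this
  rw [eL_comb]
  have := hu j
  have := hw j
  positivity

/-- half-plane -/
def eH (u : ℝ × ℝ) : Prop := 0 < u.2 ∨ (u.2 = 0 ∧ 0 < u.1)

noncomputable def eKey (u : ℝ × ℝ) : ℝ := - u.1 / (|u.1| + u.2)

lemma eH_den {u : ℝ × ℝ} (h : eH u) : 0 < |u.1| + u.2 := by
  rcases h with h | ⟨h, h'⟩
  · positivity
  · rw [h]; have := abs_pos.mpr h'.ne'; linarith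

lemma eKey_lt {a b : ℝ × ℝ} (ha : eH a) (hb : eH b) (h : eKey a < eKey b) : 0 < crx a b := by
  have da := eH_den ha
  have db := eH_den hb
  rw [eKey, eKey, div_lt_div_iff₀ da db] at h
  have a2 : 0 ≤ a.2 := by rcases ha with h | ⟨h, -⟩ <;> linarith
  have b2 : 0 ≤ b.2 := by rcases hb with h | ⟨h, -⟩ <;> linarith
  simp only [crx]
  rcases le_or_gt 0 a.1 with h1 | h1 <;> rcases le_or_gt 0 b.1 with h2 | h2
  · rw [abs_of_nonneg h1, abs_of_nonneg h2] at h; nlinarith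
  · have b2' : 0 < b.2 := by
      rcases hb with h | h
      · exact h
      · linarith [h.2]
    rcases eq_or_lt_of_le h1 with h3 | h3
    · have : 0 < a.2 := by
        rcases ha with h | h
        · exact h
        · linarith [h.2]
      nlinarith
    · nlinarith
  · rw [abs_of_neg h1, abs_of_nonneg h2] at h
    rw [abs_of_neg h1] at da
    rw [abs_of_nonneg h2] at db
    nlinarith
  · rw [abs_of_neg h1, abs_of_neg h2] at h; nlinarith

lemma eKey_eq {a b : ℝ × ℝ} (ha : eH a) (hb : eH b) (h : eKey a = eKey b) :
    ∃ t : ℝ, 0 < t ∧ b = t • a := by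
  have da := eH_den ha
  have db := eH_den hb
  have h' := h
  rw [eKey, eKey, div_eq_div_iff da.ne' db.ne'] at h'
  have a2 : 0 ≤ a.2 := by rcases ha with h | ⟨h, -⟩ <;> linarith
  have b2 : 0 ≤ b.2 := by rcases hb with h | ⟨h, -⟩ <;> linarith
  refine ⟨(|b.1| + b.2) / (|a.1| + a.2), by positivity, ?_⟩
  have e1 : b.1 = (|b.1| + b.2) / (|a.1| + a.2) * a.1 := by
    field_simp; linarith
  have e1' : |b.1| = (|b.1| + b.2) / (|a.1| + a.2) * |a.1| := by
    have := congrArg abs e1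
    rwa [abs_mul, abs_of_pos (div_pos db da)] at this
  have e2 : b.2 = (|b.1| + b.2) / (|a.1| + a.2) * a.2 := by
    have : (|b.1| + b.2) / (|a.1| + a.2) * (|a.1| + a.2) = |b.1| + b.2 := by field_simp
    linarith
  ext
  · simpa using e1
  · simpa using e2

lemma eH_or {u : ℝ × ℝ} (hu : u ≠ 0) : eH u ∨ eH (-u) := by
  by_contra hcon
  simp only [eH, not_or, not_and, not_lt, Prod.fst_neg, Prod.snd_neg] at hcon
  obtain ⟨⟨h1, h2⟩, h3, h4⟩ := hcon
  have h5 : u.2 = 0 := by linarith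
  have h6 := h2 h5
  have h7 := h4 (by linarith)
  apply hu
  ext
  · simp; linarith
  · simpa using h5

lemma eH_not {u : ℝ × ℝ} (hu : eH u) : ¬ eH (-u) := by
  simp only [eH, Prod.fst_neg, Prod.snd_neg] at *
  rintro (h | ⟨h, g⟩) <;> rcases hu with h' | ⟨h', g'⟩ <;> linarith


structure WSet (W : Finset (ℝ × ℝ)) : Prop where
  card : W.card = 12
  sym : ∀ w ∈ W, -w ∈ W
  nz : ∀ w ∈ W, w ≠ 0
  ext : ∀ w ∈ W, ∀ a ∈ W, ∀ b ∈ W, ∀ α β : ℝ, 0 ≤ α → 0 ≤ β → α + β ≤ 1 →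
    w = α • a + β • b → w = a ∨ w = b

lemma WSet.key_inj {W : Finset (ℝ × ℝ)} (h : WSet W) {a b : ℝ × ℝ} (ha : a ∈ W) (hb : b ∈ W)
    (ha' : eH a) (hb' : eH b) (hab : eKey a = eKey b) : a = b := by
  obtain ⟨t, t0, ht⟩ := eKey_eq ha' hb' hab
  rcases le_or_gt t 1 with h1 | h1
  · have := h.ext b hb a ha a ha t 0 t0.le le_rfl (by linarith) (by simpa using ht)
    tauto
  · have := h.ext a ha b hb b hb t⁻¹ 0 (by positivity) le_rfl
      (by rw [add_zero]; exact inv_le_one_of_one_le₀ h1.le)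
      (by rw [ht, smul_smul, inv_mul_cancel₀ t0.ne']; simp)
    tauto

lemma WSet.half {W : Finset (ℝ × ℝ)} (h : WSet W) :
    ∃ u : Fin 6 → ℝ × ℝ, (∀ i, u i ∈ W) ∧ (∀ i j, i < j → 0 < crx (u i) (u j)) ∧
      ∀ w ∈ W, ∃ i, w = u i ∨ w = - u i := by
  classical
  set U := W.filter eH with hU
  have hdisj : Disjoint U (U.image (fun w => -w)) := by
    rw [Finset.disjoint_left]
    intro w hw hw'
    obtain ⟨w', hw2, rfl⟩ := Finset.mem_image.mp hw'
    exact eH_not (Finset.mem_filter.mp hw2).2 (Finset.mem_filter.mp hw).2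
  have hun : U ∪ U.image (fun w => -w) = W := by
    ext w
    simp only [Finset.mem_union, Finset.mem_image, hU, Finset.mem_filter]
    constructor
    · rintro (h1 | ⟨w', h1, rfl⟩)
      · exact h1.1
      · exact h.sym _ h1.1
    · intro hw
      rcases eH_or (h.nz w hw) with h1 | h1
      · exact Or.inl ⟨hw, h1⟩
      · exact Or.inr ⟨-w, ⟨h.sym _ hw, h1⟩, neg_neg w⟩
  have hcard : U.card = 6 := by
    have := congrArg Finset.card hun
    rw [Finset.card_union_of_disjoint hdisj, Finset.card_image_of_injective _ neg_injective,
      h.card] at this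
    omega
  have hK : (U.image eKey).card = 6 := by
    rw [Finset.card_image_of_injOn, hcard]
    intro a ha b hb hab
    have ha := Finset.mem_filter.mp ha
    have hb := Finset.mem_filter.mp hb
    exact h.key_inj ha.1 hb.1 ha.2 hb.2 hab
  set f := (U.image eKey).orderEmbOfFin hK with hf
  have hmem : ∀ i, ∃ u ∈ U, eKey u = f i := fun i =>
    Finset.mem_image.mp ((U.image eKey).orderEmbOfFin_mem hK i)
  choose u hu hfu using hmem
  have hu' := fun i => Finset.mem_filter.mp (hu i)
  refine ⟨u, fun i => (hu' i).1, fun i j hij => ?_, fun w hw => ?_⟩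
  · apply eKey_lt (hu' i).2 (hu' j).2
    rw [hfu, hfu]
    exact f.strictMono hij
  · have hex : ∀ w ∈ W, eH w → ∃ i, w = u i := by
      intro w hw hw'
      have : eKey w ∈ Set.range f := by
        rw [hf, Finset.range_orderEmbOfFin]
        exact Finset.mem_coe.mpr (Finset.mem_image_of_mem _ (Finset.mem_filter.mpr ⟨hw, hw'⟩))
      obtain ⟨i, hi⟩ := this
      exact ⟨i, h.key_inj hw (hu' i).1 hw' (hu' i).2 (by rw [hfu, hi])⟩
    rcases eH_or (h.nz w hw) with h1 | h1
    · obtain ⟨i, hi⟩ := hex w hw h1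
      exact ⟨i, Or.inl hi⟩
    · obtain ⟨i, hi⟩ := hex (-w) (h.sym w hw) h1
      exact ⟨i, Or.inr (by rw [← hi, neg_neg])⟩

lemma WSet.qsys {W : Finset (ℝ × ℝ)} (h : WSet W) :
    ∃ q : ℤ → ℝ × ℝ, QSys q ∧ (∀ n, q n ∈ W) ∧ ∀ w ∈ W, ∃ n, w = q n := by
  obtain ⟨u, hu, hc, hs⟩ := h.half
  set g : ℤ → Fin 6 := fun n => ⟨(n % 6).toNat, by omega⟩ with hg
  set q : ℤ → ℝ × ℝ := fun n => if (n / 6) % 2 = 0 then u (g n) else - u (g n) with hqd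
  have hg6 : ∀ n, g (n + 6) = g n := by
    intro n; simp only [hg]; congr 2; omega
  have hq6 : ∀ n, q (n + 6) = - q n := by
    intro n
    simp only [hqd, hg6]
    by_cases h1 : (n / 6) % 2 = 0
    · rw [if_pos h1, if_neg (by omega)]
    · rw [if_neg h1, if_pos (by omega), neg_neg]
  have hqW : ∀ n, q n ∈ W := by
    intro n
    simp only [hqd]
    split_ifs
    · exact hu _
    · exact h.sym _ (hu _)
  have hglt : ∀ i j, i % 6 < j % 6 → g i < g j := by
    intro i j hij
    rw [Fin.lt_def]
    simp only [hg]
    omega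
  have hqc : ∀ i j, i < j → j < i + 6 → 0 < crx (q i) (q j) := by
    intro i j h1 h2
    by_cases h3 : i / 6 = j / 6
    · have := hc _ _ (hglt i j (by omega))
      simp only [hqd, h3]
      split_ifs
      · exact this
      · rw [crx_neg_l, crx_neg_r, neg_neg]; exact this
    · have := hc _ _ (hglt j i (by omega))
      rw [crx_swap] at this
      have h4 : j / 6 = i / 6 + 1 := by omega
      simp only [hqd, h4]
      by_cases h5 : (i / 6) % 2 = 0
      · rw [if_pos h5, if_neg (by omega), crx_neg_r]; exact this
      · rw [if_neg h5, if_pos (by omega), crx_neg_l]; exact this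
  refine ⟨q, ⟨hq6, hqc, ?_⟩, hqW, ?_⟩
  · intro i j l hij hjl hli
    by_contra hcon
    have A := hqc i j hij (by omega)
    have B := hqc j l hjl (by omega)
    have C := hqc i l (by omega) (by omega)
    have key : q j = (crx (q j) (q l) / crx (q i) (q l)) • q i +
        (crx (q i) (q j) / crx (q i) (q l)) • q l := by
      ext
      · simp only [Prod.fst_add, Prod.smul_fst, smul_eq_mul]
        field_simp
        simp only [crx]; ring
      · simp only [Prod.snd_add, Prod.smul_snd, smul_eq_mul]
        field_simp
        simp only [crx]; ring
    rcases h.ext _ (hqW j) _ (hqW i) _ (hqW l) _ _ (by positivity) (by positivity)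
      (by rw [← add_div, div_le_one C]; linarith) key with h1 | h1
    · rw [h1, crx_self] at A; exact lt_irrefl _ A
    · rw [h1, crx_self] at B; exact lt_irrefl _ B
  · intro w hw
    obtain ⟨i, hi⟩ := hs w hw
    have gi : g (i.val : ℤ) = i := by
      ext; simp only [hg]; omega
    have hqi : q (i.val : ℤ) = u i := by
      simp only [hqd, gi]
      rw [if_pos (by omega)]
    rcases hi with hi | hi
    · exact ⟨i.val, by rw [hqi, hi]⟩
    · exact ⟨i.val + 6, by rw [hq6, hqi, hi]⟩

lemma WSet.zonogon {W : Finset (ℝ × ℝ)} (h : WSet W) :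
    ∃ e : ℤ → ℝ × ℝ, ESys e ∧ convexHull ℝ (W : Set (ℝ × ℝ)) = eZ e := by
  obtain ⟨q, hq, hW, hW'⟩ := h.qsys
  have hE := hq.esys
  refine ⟨_, hE, Set.Subset.antisymm ?_ ?_⟩
  · refine convexHull_min ?_ (eZ_convex _)
    intro w hw
    obtain ⟨n, rfl⟩ := hW' w hw
    rw [← hq.ept n]
    exact hE.pt_mem n
  · intro u hu
    obtain ⟨j, a, b, ha, hb, hu'⟩ := hE.locate u
    have h1 := hu j
    rw [hu', eL_cone hE] at h1
    have h2 := hE.crx_pt j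
    have h3 : a + b ≤ 1 := by
      by_contra hcon
      nlinarith
    rw [hq.ept, hq.ept] at hu'
    have hcv := convex_convexHull ℝ (W : Set (ℝ × ℝ))
    have m := fun n => subset_convexHull ℝ (W : Set (ℝ × ℝ)) (hW n)
    have h0 : (0 : ℝ × ℝ) ∈ convexHull ℝ (W : Set (ℝ × ℝ)) := by
      have := hcv (m 0) (m 6) (show (0:ℝ) ≤ 1/2 by norm_num) (show (0:ℝ) ≤ 1/2 by norm_num) (by norm_num)
      have e6 := hq.hq 0
      rw [zero_add] at e6
      rwa [e6, smul_neg, add_neg_cancel] at this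
    have hsum := hcv.sum_mem (t := Finset.univ) (w := ![a, b, 1 - a - b]) (z := ![q j, q (j+1), 0])
      (by intro i _; fin_cases i <;> simp <;> linarith)
      (by simp [Fin.sum_univ_succ])
      (by intro i _; fin_cases i <;> simp [h0, m])
    rw [hu']
    simpa [Fin.sum_univ_succ] using hsum

lemma interior_shift (P Z : Set (ℝ × ℝ)) (c : ℝ × ℝ) (h : ∀ p, p ∈ P ↔ p - c ∈ Z) (p : ℝ × ℝ) :
    p ∈ interior P ↔ p - c ∈ interior Z := by
  have : P = (Homeomorph.subRight c) ⁻¹' Z := by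
    ext p; exact h p
  rw [this, ← Homeomorph.preimage_interior]
  rfl

lemma polygon_wset (P : Set (ℝ × ℝ)) (V : Finset (ℝ × ℝ))
    (hP : IsConvexPolygon P V) (hV : V.card = 12) (hsym : IsCentrallySymmetric P) :
    ∃ c : ℝ × ℝ, ∃ W : Finset (ℝ × ℝ), WSet W ∧
      ∀ p, p ∈ P ↔ p - c ∈ convexHull ℝ (W : Set (ℝ × ℝ)) := by
  classical
  obtain ⟨hPV, hext, -⟩ := hP
  obtain ⟨c, hc⟩ := hsym
  have hcv : Convex ℝ P := by rw [hPV]; exact convex_convexHull _ _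
  have hextV : ∀ p, p ∈ Set.extremePoints ℝ P → p ∈ V := by
    intro p hp
    rw [hPV] at hp
    exact extremePoints_convexHull_subset hp
  have hVP : ∀ v ∈ V, v ∈ P := fun v hv => (hext v hv).1
  have hc2 : ∀ p : ℝ × ℝ, 2 • c - (2 • c - p) = p := fun p => sub_sub_cancel _ _
  have hsymV : ∀ v ∈ V, 2 • c - v ∈ V := by
    intro v hv
    apply hextV
    have := hext v hv
    rw [mem_extremePoints] at this ⊢
    refine ⟨hc _ this.1, ?_⟩
    intro x1 h1 x2 h2 hx
    obtain ⟨a, b, ha, hb, hab, hxx⟩ := hx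
    have := this.2 (2 • c - x1) (hc _ h1) (2 • c - x2) (hc _ h2) ⟨a, b, ha, hb, hab, by
      rw [smul_sub, smul_sub, sub_add_sub_comm, hxx, ← add_smul, hab, one_smul, hc2]⟩
    constructor
    · rw [← this.1, hc2]
    · rw [← this.2, hc2]
  obtain ⟨v0, hv0⟩ : V.Nonempty := by rw [← Finset.card_pos]; omega
  have mid : ∀ p : ℝ × ℝ, (1/2 : ℝ) • p + (1/2 : ℝ) • (2 • c - p) = c := by
    intro p; ext <;> simp <;> ring
  have hcP : c ∈ P := by
    have := hcv (hVP v0 hv0) (hc _ (hVP v0 hv0)) (show (0:ℝ) ≤ 1/2 by norm_num)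
      (show (0:ℝ) ≤ 1/2 by norm_num) (by norm_num)
    rwa [mid] at this
  have hcV : c ∉ V := by
    intro hcV
    obtain ⟨v, hv, hvc⟩ := Finset.exists_mem_ne (by omega : 1 < V.card) c
    have := hext c hcV
    rw [mem_extremePoints] at this
    exact hvc (this.2 v (hVP v hv) (2 • c - v) (hc _ (hVP v hv))
      ⟨1/2, 1/2, by norm_num, by norm_num, by norm_num, mid v⟩).1
  refine ⟨c, V.image (fun v => v - c), ⟨?_, ?_, ?_, ?_⟩, ?_⟩
  · rw [Finset.card_image_of_injective _ (sub_left_injective), hV]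
  · intro w hw
    obtain ⟨v, hv, rfl⟩ := Finset.mem_image.mp hw
    exact Finset.mem_image.mpr ⟨_, hsymV v hv, by rw [two_smul]; abel⟩
  · intro w hw hw0
    obtain ⟨v, hv, rfl⟩ := Finset.mem_image.mp hw
    rw [sub_eq_zero] at hw0
    exact hcV (hw0 ▸ hv)
  · intro w hw a ha b hb α β hα hβ hαβ hwab
    obtain ⟨v, hv, rfl⟩ := Finset.mem_image.mp hw
    obtain ⟨a, ha2, rfl⟩ := Finset.mem_image.mp ha
    obtain ⟨b, hb2, rfl⟩ := Finset.mem_image.mp hb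
    have hsub : convexHull ℝ ({a, b, c} : Set (ℝ × ℝ)) ⊆ P := by
      refine convexHull_min ?_ hcv
      rintro p (rfl | rfl | rfl)
      · exact hVP _ ha2
      · exact hVP _ hb2
      · exact hcP
    have hvmem : v ∈ convexHull ℝ ({a, b, c} : Set (ℝ × ℝ)) := by
      have hcv := convex_convexHull ℝ ({a, b, c} : Set (ℝ × ℝ))
      have hsum := hcv.sum_mem (t := Finset.univ) (w := ![α, β, 1 - α - β]) (z := ![a, b, c])
        (by intro i _; fin_cases i <;> simp <;> linarith)
        (by simp [Fin.sum_univ_succ])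
        (by intro i _; fin_cases i <;> (apply subset_convexHull; simp))
      have : v = α • a + (β • b + (1 - α - β) • c) := by
        have : v = α • (a - c) + β • (b - c) + c := by rw [← hwab]; abel
        rw [this]
        ext <;> simp <;> ring
      rw [this]
      simpa [Fin.sum_univ_succ] using hsum
    have := extremePoints_convexHull_subset
      (inter_extremePoints_subset_extremePoints_of_subset hsub ⟨hvmem, hext v hv⟩)
    rcases this with h | h | h
    · left; rw [h]
    · right; rw [h]
    · exact absurd (h ▸ hv) hcV
  · intro p
    have : ((V.image (fun v => v - c) : Finset (ℝ × ℝ)) : Set (ℝ × ℝ)) = (-c) +ᵥ (V : Set (ℝ × ℝ)) := by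
      rw [Finset.coe_image, ← Set.image_vadd]
      refine Set.image_congr fun w _ => ?_
      rw [vadd_eq_add, sub_eq_neg_add]
    rw [this, convexHull_vadd, hPV, Set.mem_vadd_set]
    constructor
    · intro hp; exact ⟨p, hp, by simp [sub_eq_neg_add]⟩
    · rintro ⟨y, hy, hyp⟩
      have : y = p := by
        have : -c + y = p - c := hyp
        rw [sub_eq_neg_add] at this
        exact add_left_cancel this
      rwa [← this]

theorem tau_dodecagon_ge (P : Set (ℝ × ℝ)) (V : Finset (ℝ × ℝ))
    (hP : IsConvexPolygon P V) (hV : V.card = 12) (hsym : IsCentrallySymmetric P)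
    (k : ℕ) (hk : 0 < k) (ι : Type) (x : ι → ℝ × ℝ)
    (htile : IsKFoldTranslativeTiling P x k) :
    6 ≤ k := by
  obtain ⟨c, W, hW, hPW⟩ := polygon_wset P V hP hV hsym
  obtain ⟨e, hE, hZ⟩ := hW.zonogon
  rw [hZ] at hPW
  obtain ⟨t1, t2, t3⟩ := htile
  have hsub : ∀ p i, p - (x i + c) = p - x i - c := fun p i => by abel
  have T : ETile e (fun i => x i + c) k := by
    refine ⟨hE, ?_, ?_, ?_, ?_⟩
    · have := (W.finite_toSet.isCompact_convexHull (𝕜 := ℝ)).isBounded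
      rw [hZ] at this
      obtain ⟨R, hR⟩ := this.exists_norm_le
      exact ⟨R, hR⟩
    · intro R
      refine (t1 (R + ‖c‖)).subset ?_
      intro i hi
      have hi : ‖x i + c‖ ≤ R := hi
      show ‖x i‖ ≤ R + ‖c‖
      have : x i = (x i + c) - c := by abel
      rw [this]
      exact (norm_sub_le _ _).trans (by linarith)
    · intro p
      obtain ⟨s, hs, hs'⟩ := t2 p
      exact ⟨s, hs, fun i hi => by rw [hsub]; exact (hPW _).1 (hs' i hi)⟩
    · intro p s hs
      refine t3 p s fun i hi => ?_
      rw [interior_shift P _ c hPW, hE.interior_eq, ← hsub]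
      exact hs i hi
  exact T.final hk
end
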